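/- Let δ̄ > 0 and let (u, v) ∈ S(δ̄) with associated convex domains Ω₁ and Ω₂ (each with nonempty interior and with 0 ∈ ∂Ω₁ ∩ ∂Ω₂). Then the left tangents satisfy L_{Ω₁}(0) · L_{Ω₂}(0) > 0 and the right tangents satisfy R_{Ω₁}(0) · R_{Ω₂}(0) > 0, where · denotes the Euclidean inner product (obliqueness: corresponding one-sided tangent directions of Ω₁ and Ω₂ at the origin make an angle strictly less than π/2). -/

import Mathlib

noncomputable section

open MeasureTheory Metric Set
open scoped RealInnerProductSpace

abbrev R2 : Type := EuclideanSpace ℝ (Fin 2)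

/-- `p` is a subgradient of `f` at `x`. -/
def SubgradAt (f : R2 → ℝ) (x p : R2) : Prop :=
  ∀ y : R2, f x + ⟪p, y - x⟫ ≤ f y

/-- `ψ` is a (canonically extended) potential of the optimal transport between `U₁` and `U₂`:
it is convex on `ℝ²`, all its subgradients lie in `closure U₂`, and its gradient map pushes
the Lebesgue measure restricted to `U₁` forward to the Lebesgue measure restricted to `U₂`. -/
def IsOTPotential (U₁ U₂ : Set R2) (ψ : R2 → ℝ) : Prop :=
  ConvexOn ℝ Set.univ ψ ∧
  (∀ x p : R2, SubgradAt ψ x p → p ∈ closure U₂) ∧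
  MeasureTheory.Measure.map (fun x => gradient ψ x) (MeasureTheory.volume.restrict U₁) =
    MeasureTheory.volume.restrict U₂

/-- `S` is a centred section of `w` at `x₀` of height `h`:
`S = {w < w x₀ + p · (· - x₀) + h}` for a slope `p` chosen so that
the centre of mass of `S` is `x₀`. -/
def IsCentredSection (w : R2 → ℝ) (x₀ : R2) (h : ℝ) (S : Set R2) : Prop :=
  ∃ p : R2, S = {x : R2 | w x < w x₀ + ⟪p, x - x₀⟫ + h} ∧
    (∫ x in S, (x - x₀) ∂(MeasureTheory.volume)) = 0

/-- Dilation of `S` about `x₀` by factor `t`. -/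
def dilate (x₀ : R2) (t : ℝ) (S : Set R2) : Set R2 :=
  (fun x => x₀ + t • (x - x₀)) '' S

/-- The (closed) ellipse centred at `0` with half-axis `A` in unit direction `e` and
half-axis `B` in the orthogonal unit direction `f`. -/
def ellipse (e f : R2) (A B : ℝ) : Set R2 :=
  {x : R2 | (⟪x, e⟫ / A) ^ 2 + (⟪x, f⟫ / B) ^ 2 ≤ 1}

/-- `w` is an Alexandrov solution of `det D² w = χ_Ω` in `ℝ²`: the Lebesgue measure of the
subdifferential image of any Borel set `E` equals the Lebesgue measure of `E ∩ Ω`. -/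
def AlexandrovSol (w : R2 → ℝ) (Ω : Set R2) : Prop :=
  ∀ E : Set R2, MeasurableSet E →
    MeasureTheory.volume (⋃ x ∈ E, {p : R2 | SubgradAt w x p}) =
      MeasureTheory.volume (E ∩ Ω)

/-- Membership of the pair `(u, v)` in the normalized family `S(δ̄)`, together with the
associated data: the domains `Ω₁, Ω₂`, and, for each height `h ∈ (0,1]`, the ellipse
`E_h = ellipse (e h) (f h) (L h) (l h)` centred at `0` (long half-axis `L h` in unit
direction `e h`, short half-axis `l h` in the orthogonal unit direction `f h`, area `hπ`,
so `L h * l h = h`), whose perpendicular ellipse is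
`E_h^⊥ = ellipse (f h) (e h) (L h) (l h)`.  The eccentricity is `η_u(h) = L h / l h`. -/
def InSFamily (δb : ℝ) (u v : R2 → ℝ) (Ω₁ Ω₂ : Set R2)
    (L l : ℝ → ℝ) (e f : ℝ → R2) : Prop :=
  ConvexOn ℝ Set.univ u ∧ ConvexOn ℝ Set.univ v ∧
  Convex ℝ Ω₁ ∧ Convex ℝ Ω₂ ∧
  (interior Ω₁).Nonempty ∧ (interior Ω₂).Nonempty ∧
  (0 : R2) ∈ frontier Ω₁ ∧ (0 : R2) ∈ frontier Ω₂ ∧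
  (fun x => gradient u x) '' Ω₁ = Ω₂ ∧ (fun y => gradient v y) '' Ω₂ = Ω₁ ∧
  AlexandrovSol u Ω₁ ∧ u 0 = 0 ∧ SubgradAt u 0 0 ∧
  AlexandrovSol v Ω₂ ∧ v 0 = 0 ∧ SubgradAt v 0 0 ∧
  (∀ y ∈ Ω₂, v y = ⨆ x : R2, (⟪x, y⟫ - u x)) ∧
  L 1 = 1 ∧ l 1 = 1 ∧
  (∀ h : ℝ, h ∈ Set.Ioc (0 : ℝ) 1 →
    ‖e h‖ = 1 ∧ ‖f h‖ = 1 ∧ ⟪e h, f h⟫ = 0 ∧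
    0 < l h ∧ l h ≤ L h ∧ L h * l h = h ∧
    (∃ S : Set R2, IsCentredSection u 0 h S ∧
      (∃ xh : R2, (fun z => xh + δb • z) '' ellipse (e h) (f h) (L h) (l h) ⊆ Ω₁ ∩ S) ∧
      S ⊆ (fun z => δb⁻¹ • z) '' ellipse (e h) (f h) (L h) (l h)) ∧
    (∃ S : Set R2, IsCentredSection v 0 h S ∧
      (∃ yh : R2, (fun z => yh + δb • z) '' ellipse (f h) (e h) (L h) (l h) ⊆ Ω₂ ∩ S) ∧
      S ⊆ (fun z => δb⁻¹ • z) '' ellipse (f h) (e h) (L h) (l h)))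

/-- `z ↦ t • x` cone over `Ω` with vertex `0` (closed): the tangent cone of `Ω` at `0`. -/
def tangentConeZero (Ω : Set R2) : Set R2 :=
  closure {y : R2 | ∃ t : ℝ, 0 ≤ t ∧ ∃ x ∈ Ω, y = t • x}

/-- The planar cross product (determinant) of two vectors. -/
def det2 (a b : R2) : ℝ := a 0 * b 1 - a 1 * b 0

/-- `r` is the unit direction of the right tangent ray of `∂Ω` at `0`:
it lies in the tangent cone of `Ω` at `0` and the whole tangent cone lies
(weakly) counterclockwise from it. -/
def IsRightTangent (Ω : Set R2) (r : R2) : Prop :=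
  ‖r‖ = 1 ∧ r ∈ tangentConeZero Ω ∧ ∀ x ∈ tangentConeZero Ω, 0 ≤ det2 r x

/-- `l` is the unit direction of the left tangent ray of `∂Ω` at `0`:
it lies in the tangent cone of `Ω` at `0` and the whole tangent cone lies
(weakly) clockwise from it. -/
def IsLeftTangent (Ω : Set R2) (l : R2) : Prop :=
  ‖l‖ = 1 ∧ l ∈ tangentConeZero Ω ∧ ∀ x ∈ tangentConeZero Ω, det2 l x ≤ 0

/-- The open cone of direction `e` and opening angle `θ`. -/
def cone2 (e : R2) (θ : ℝ) : Set R2 :=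
  {y : R2 | ∃ lam : ℝ, 0 < lam ∧ ∃ w : R2, ‖w‖ = 1 ∧
    InnerProductGeometry.angle w e < θ ∧ y = lam • w}

/-!
Suppose corresponding tangent rays of `Ω₁` and `Ω₂` at `0` are orthogonal. In a sheared dual frame
they point along `a₁` and `-b₂`, and `u` is nondecreasing in the direction `a₁`, so it vanishes on
the ray `-t a₁`. The comparison principle bounds `u`, on a small box, by its composition with an
elliptic rotation of determinant one through the angle `θ`, up to an error `O(θ²)`. Iterating over
small angles removes the error and gives `u (g t a₂) ≤ u (t a₁)` for a fixed `g > 0`. As centred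
sections are balanced, the section of height `u (t a₁)` then has width of order `t` in the direction
`-a₂` too. Orthogonality, on the other hand, makes the subgradients `p` at `t a₁` almost vertical,
`⟪p, a₁⟫ = o(-⟪p, a₂⟫)` as `t → 0`, and this is incompatible with the subgradient inequality at a
point of the section in the direction `-a₂`.

Suppose the tangent rays `r₁`, `r₂` make an obtuse angle. If some `x ∈ Ω₁` had `⟪x, r₂⟫ > 0`, the
cone over `r₁` and `x` would contain an outward normal direction of `Ω₂` along which `u ≤ 0`. So
`⟪·, r₂⟫ ≤ 0` on `Ω₁`, likewise `⟪·, r₁⟫ ≤ 0` on `Ω₂`, and expanding `⟪r₁, r₂⟫ ⟪p, x⟫` with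
`p = ∇u x` in the two normals and tangents gives `⟪p, x⟫ ≤ 0`, contradicting `⟪p, x⟫ ≥ u x > 0`.
-/

section Subgradient

variable {E : Type*} [NormedAddCommGroup E] [InnerProductSpace ℝ E] {f : E → ℝ} {x y p q : E}

/-- `p` is a subgradient of `f` at `x`, in a real inner product space of any dimension; on `R2` this
is `SubgradAt`. -/
def IsSubgradient (f : E → ℝ) (x p : E) : Prop :=
  ∀ y, f x + ⟪p, y - x⟫ ≤ f y

namespace IsSubgradient

lemma inner_sub_le (hp : IsSubgradient f x p) (z : E) : ⟪z, p⟫ - f z ≤ ⟪x, p⟫ - f x := by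
  have hz := hp z
  rw [inner_sub_right, real_inner_comm z p, real_inner_comm x p] at hz
  linarith

lemma convexCombo (hp : IsSubgradient f x p) (hq : IsSubgradient f x q) {a b : ℝ}
    (ha : 0 ≤ a) (hb : 0 ≤ b) (hab : a + b = 1) : IsSubgradient f x (a • p + b • q) := by
  intro y
  calc f x + ⟪a • p + b • q, y - x⟫
      = a * (f x + ⟪p, y - x⟫) + b * (f x + ⟪q, y - x⟫) := by
        rw [inner_add_left, real_inner_smul_left, real_inner_smul_left]
        linear_combination -f x * hab
    _ ≤ a * f y + b * f y := by gcongr <;> apply_assumption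
    _ = f y := by rw [← add_mul, hab, one_mul]

lemma inner_sub_nonneg (hp : IsSubgradient f x p) (hq : IsSubgradient f y q) :
    0 ≤ ⟪q - p, y - x⟫ := by
  have hpy := hp y
  have hqx := hq x
  rw [← neg_sub y x, inner_neg_right] at hqx
  rw [inner_sub_left]
  linarith

lemma eq_gradient [CompleteSpace E] (hp : IsSubgradient f x p) (hd : DifferentiableAt ℝ f x) :
    p = gradient f x := by
  have hmin : IsLocalMin (fun y => f y - ⟪p, y - x⟫) x :=
    .of_forall fun y => by
      simpa [le_sub_iff_add_le] using hp y
  have hlin : HasFDerivAt (fun y => ⟪p, y - x⟫) (innerSL ℝ p) x :=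
    (innerSL ℝ p).hasFDerivAt.comp x ((hasFDerivAt_id x).sub_const x)
  have hzero := hmin.hasFDerivAt_eq_zero (hd.hasGradientAt.hasFDerivAt.sub hlin)
  refine (ext_inner_right ℝ fun z => ?_).symm
  simpa [sub_eq_zero] using DFunLike.congr_fun hzero z

end IsSubgradient

lemma isSubgradient_of_eventually (hf : ConvexOn ℝ univ f)
    (h : ∀ᶠ y in nhds x, f x + ⟪p, y - x⟫ ≤ f y) : IsSubgradient f x p := by
  have hconv : ConvexOn ℝ univ (fun y => f y + (-(innerSL ℝ p)) y) :=
    hf.add ((-(innerSL ℝ p)).toLinearMap.convexOn convex_univ)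
  have hloc : IsLocalMin (fun y => f y + (-(innerSL ℝ p)) y) x := by
    filter_upwards [h] with y hy
    simp only [neg_apply, innerSL_apply_apply]
    rw [inner_sub_right] at hy
    linarith
  intro y
  have hy := IsMinOn.of_isLocalMin_of_convex_univ hloc hconv y
  simp only [neg_apply, innerSL_apply_apply] at hy
  rw [inner_sub_right]
  linarith

lemma isClosed_subgradient_graph (hf : Continuous f) :
    IsClosed {z : E × E | IsSubgradient f z.1 z.2} := by
  simp only [IsSubgradient, ofPred_forall]
  exact isClosed_iInter fun y => isClosed_le (by fun_prop) continuous_const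

lemma exists_isSubgradient [CompleteSpace E] (hf : ConvexOn ℝ univ f) (hc : Continuous f) (x : E) :
    ∃ p, IsSubgradient f x p := by
  have hconv : Convex ℝ {z : E × ℝ | f z.1 < z.2} := by simpa using hf.convex_strict_epigraph
  have hopen : IsOpen {z : E × ℝ | f z.1 < z.2} :=
    isOpen_lt (hc.comp continuous_fst) continuous_snd
  obtain ⟨F, hF⟩ := geometric_hahn_banach_open_point hconv hopen (x := (x, f x)) (by simp)
  have hsplit (y : E) (r : ℝ) : F (y, r) = F (y, 0) + r * F (0, 1) := by
    rw [← smul_eq_mul, ← map_smul, ← map_add]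
    simp
  have hvert : F (0, 1) < 0 := by
    have := hF (x, f x + 1) (by simp)
    rw [hsplit, hsplit x (f x)] at this
    linarith
  refine ⟨(-F (0, 1))⁻¹ • (InnerProductSpace.toDual ℝ E).symm
    (F.comp (ContinuousLinearMap.inl ℝ E ℝ)), fun y => le_of_forall_pos_le_add fun ε hε => ?_⟩
  have hy := hF (y, f y + ε) (by simpa using hε)
  rw [hsplit, hsplit x (f x)] at hy
  rw [real_inner_smul_left, InnerProductSpace.toDual_symm_apply, map_sub]
  simp only [ContinuousLinearMap.comp_apply, ContinuousLinearMap.inl_apply]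
  rw [← le_sub_iff_add_le', inv_mul_le_iff₀ (neg_pos.2 hvert)]
  linarith

lemma isSubgradient_gradient [CompleteSpace E] (hf : ConvexOn ℝ univ f) (hc : Continuous f)
    (hd : DifferentiableAt ℝ f x) : IsSubgradient f x (gradient f x) := by
  obtain ⟨p, hp⟩ := exists_isSubgradient hf hc x
  rwa [← hp.eq_gradient hd]

lemma le_add_smul_of_subgradients_nonneg [CompleteSpace E] (hf : ConvexOn ℝ univ f)
    (hc : Continuous f) {d : E} (h : ∀ x p, IsSubgradient f x p → 0 ≤ ⟪p, d⟫) (x : E) {s : ℝ}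
    (hs : 0 ≤ s) : f x ≤ f (x + s • d) := by
  obtain ⟨p, hp⟩ := exists_isSubgradient hf hc x
  have hxs := hp (x + s • d)
  rw [add_sub_cancel_left, real_inner_smul_right] at hxs
  linarith [mul_nonneg hs (h x p hp)]

section FiniteDimensional

variable [FiniteDimensional ℝ E] {K G : Set E}

lemma exists_norm_subgradient_le (hc : Continuous f) (hK : IsCompact K) :
    ∃ M, ∀ x ∈ K, ∀ p, IsSubgradient f x p → ‖p‖ ≤ M := by
  obtain ⟨A, hA⟩ := (hK.cthickening (r := 1)).exists_bound_of_continuousOn hc.continuousOn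
  refine ⟨2 * A, fun x hx p hp => ?_⟩
  have hfx := hA x (self_subset_cthickening K hx)
  rcases eq_or_ne p 0 with rfl | hp0
  · rw [norm_zero]
    linarith [norm_nonneg (f x)]
  have hstep := hp (x + ‖p‖⁻¹ • p)
  rw [add_sub_cancel_left, real_inner_smul_right, real_inner_self_eq_norm_mul_norm,
    inv_mul_cancel_left₀ (norm_ne_zero_iff.2 hp0)] at hstep
  have hfy := hA (x + ‖p‖⁻¹ • p)
    (mem_cthickening_of_dist_le _ x 1 K hx (by simp [norm_smul, hp0]))
  linarith [(abs_le.1 hfx).1, (abs_le.1 hfy).2]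

lemma isCompact_subgradient_graph (hc : Continuous f) (hK : IsCompact K) :
    IsCompact {z : E × E | z.1 ∈ K ∧ IsSubgradient f z.1 z.2} := by
  obtain ⟨M, hM⟩ := exists_norm_subgradient_le hc hK
  refine (hK.prod (isCompact_closedBall (0 : E) M)).of_isClosed_subset
    ((hK.isClosed.preimage continuous_fst).inter (isClosed_subgradient_graph hc)) ?_
  rintro ⟨x, p⟩ ⟨hx, hp⟩
  exact ⟨hx, by simpa using hM x hx p hp⟩

lemma exists_forall_subgradient_mem_of_dist_le (hc : Continuous f) (hK : IsCompact K)
    (hG : IsOpen G) (h : ∀ x ∈ K, ∀ p, IsSubgradient f x p → p ∈ G) :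
    ∃ ρ > 0, ∀ x₀ ∈ K, ∀ x, dist x x₀ ≤ ρ → ∀ p, IsSubgradient f x p → p ∈ G := by
  have hbad : IsCompact ({z : E × E | z.1 ∈ cthickening 1 K ∧ IsSubgradient f z.1 z.2} ∩
      Prod.snd ⁻¹' Gᶜ) :=
    (isCompact_subgradient_graph hc hK.cthickening).inter_right
      (hG.isClosed_compl.preimage continuous_snd)
  obtain ⟨δ, hδ, hδK⟩ := hK.exists_thickening_subset_open
    (hbad.image continuous_fst).isClosed.isOpen_compl (by
      rintro x hx ⟨z, ⟨hz, hzG⟩, rfl⟩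
      exact hzG (h _ hx _ hz.2))
  refine ⟨min 1 (δ / 2), by positivity, fun x₀ hx₀ x hx p hp => by_contra fun hpG => ?_⟩
  have hx1 : x ∈ cthickening 1 K :=
    mem_cthickening_of_dist_le _ x₀ _ _ hx₀ (hx.trans (min_le_left _ _))
  have hxδ : x ∈ thickening δ K :=
    mem_thickening_iff.2 ⟨x₀, hx₀, (hx.trans (min_le_right _ _)).trans_lt (half_lt_self hδ)⟩
  exact hδK hxδ ⟨(x, p), ⟨⟨hx1, hp⟩, hpG⟩, rfl⟩

end FiniteDimensional

end Subgradient

lemma apply_smul_le_of_convexOn {E : Type*} [AddCommGroup E] [Module ℝ E] {f : E → ℝ}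
    (hf : ConvexOn ℝ univ f) (hf0 : f 0 = 0) (x : E) {a : ℝ} (ha : 0 ≤ a) (ha1 : a ≤ 1) :
    f (a • x) ≤ a * f x := by
  simpa [hf0] using hf.2 (mem_univ x) (mem_univ 0) ha (sub_nonneg.2 ha1) (by ring)

lemma ae_differentiableAt_of_locallyLipschitz {E : Type*} [NormedAddCommGroup E]
    [NormedSpace ℝ E] [FiniteDimensional ℝ E] [MeasurableSpace E] [BorelSpace E] {μ : Measure E}
    [μ.IsAddHaarMeasure] {f : E → ℝ} (hf : LocallyLipschitz f) :
    ∀ᵐ x ∂μ, DifferentiableAt ℝ f x := by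
  refine measure_null_of_locally_null _ fun x _ => ?_
  obtain ⟨K, t, ht, hK⟩ := hf x
  have hnull : μ {y | ¬(y ∈ interior t → DifferentiableWithinAt ℝ f (interior t) y)} = 0 :=
    (hK.mono interior_subset).ae_differentiableWithinAt_of_mem
  refine ⟨{y | ¬DifferentiableAt ℝ f y} ∩ interior t,
    inter_mem_nhdsWithin _ (interior_mem_nhds.2 ht), measure_mono_null ?_ hnull⟩
  exact fun y ⟨hyd, hyt⟩ hy => hyd ((hy hyt).differentiableAt (isOpen_interior.mem_nhds hyt))

section SubgradientRange

variable {E : Type*} [NormedAddCommGroup E] [InnerProductSpace ℝ E] {f : E → ℝ} {p q : E}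

/-- The set of all slopes of supporting affine functions of `f`, that is, the range of its
subdifferential. -/
def subgradientRange (f : E → ℝ) : Set E :=
  {p | ∃ x, IsSubgradient f x p}

lemma exists_isSubgradient_of_mem_image_gradient [CompleteSpace E] (hf : ConvexOn ℝ univ f)
    (hc : Continuous f) {x₀ : E} (h₀ : IsSubgradient f x₀ 0) {Ω : Set E}
    (hq : q ∈ gradient f '' Ω) : ∃ x ∈ insert x₀ Ω, IsSubgradient f x q := by
  obtain ⟨x, hx, rfl⟩ := hq
  by_cases hd : DifferentiableAt ℝ f x
  · exact ⟨x, mem_insert_of_mem _ hx, isSubgradient_gradient hf hc hd⟩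
  -- `gradient` is `0` by convention at points of nondifferentiability.
  · exact ⟨x₀, mem_insert _ _, gradient_eq_zero_of_not_differentiableAt hd ▸ h₀⟩

variable [FiniteDimensional ℝ E]

lemma exists_linear_growth_of_mem_interior (hq : q ∈ interior (subgradientRange f)) :
    ∃ c > 0, ∃ C, ∀ z, ⟪q, z⟫ + c * ‖z‖ - C ≤ f z := by
  obtain ⟨r, hr, hrq⟩ := nhds_basis_closedBall.mem_iff.1 (mem_interior_iff_mem_nhds.1 hq)
  have hdir (d : E) (hd : ‖d‖ ≤ 1) : ∃ C, ∀ z, ⟪q, z⟫ + r * ⟪d, z⟫ - C ≤ f z := by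
    obtain ⟨x, hx⟩ := hrq (show q + r • d ∈ closedBall q r by
      simpa [norm_smul, abs_of_pos hr] using mul_le_of_le_one_right hr.le hd)
    refine ⟨⟪x, q + r • d⟫ - f x, fun z => ?_⟩
    have hz := hx.inner_sub_le z
    rw [real_inner_comm, inner_add_left, real_inner_smul_left] at hz
    linarith
  let b := stdOrthonormalBasis ℝ E
  have hcoord (i) : ∃ C, ∀ z, ⟪q, z⟫ + r * |⟪b i, z⟫| - C ≤ f z := by
    obtain ⟨C, hC⟩ := hdir (b i) (b.norm_eq_one i).le
    obtain ⟨C', hC'⟩ := hdir (-b i) (by rw [norm_neg, b.norm_eq_one])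
    refine ⟨max C C', fun z => ?_⟩
    have hz := hC z
    have hz' := hC' z
    rw [inner_neg_left] at hz'
    rcases abs_cases ⟪b i, z⟫ with ⟨h, -⟩ | ⟨h, -⟩ <;> rw [h] <;>
      linarith [le_max_left C C', le_max_right C C']
  choose C hC using hcoord
  obtain ⟨C₀, hC₀⟩ := hdir 0 (by simp)
  set n : ℝ := (Module.finrank ℝ E : ℝ) with hn
  refine ⟨r / (n + 1), by positivity, (∑ i, C i + C₀) / (n + 1), fun z => ?_⟩
  have hnorm : ‖z‖ ≤ ∑ i, |⟪b i, z⟫| := by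
    calc ‖z‖ = ‖∑ i, ⟪b i, z⟫ • b i‖ := by rw [b.sum_repr' z]
      _ ≤ ∑ i, ‖⟪b i, z⟫ • b i‖ := norm_sum_le _ _
      _ = ∑ i, |⟪b i, z⟫| := by simp [norm_smul]
  have hsum := Finset.sum_le_sum fun i (_ : i ∈ Finset.univ) => hC i z
  have hz₀ := hC₀ z
  simp only [Finset.sum_sub_distrib, Finset.sum_add_distrib, ← Finset.mul_sum, Finset.sum_const,
    Finset.card_univ, Fintype.card_fin, nsmul_eq_mul, ← hn] at hsum
  rw [inner_zero_left] at hz₀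
  have hmul := mul_le_mul_of_nonneg_left hnorm hr.le
  rw [div_mul_eq_mul_div, add_sub_assoc, ← sub_div, ← le_sub_iff_add_le',
    div_le_iff₀ (by positivity)]
  linarith

lemma combo_mem_subgradientRange (hc : Continuous f) (hp : p ∈ subgradientRange f)
    (hq : q ∈ interior (subgradientRange f)) {t : ℝ} (ht : 0 < t) (ht1 : t ≤ 1) :
    (1 - t) • p + t • q ∈ subgradientRange f := by
  obtain ⟨x₀, hx₀⟩ := hp
  obtain ⟨c, hc0, C, hgrowth⟩ := exists_linear_growth_of_mem_interior hq
  set w := (1 - t) • p + t • q with hw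
  have hlow (z : E) : (1 - t) * (f x₀ - ⟪x₀, p⟫) + t * (c * ‖z‖ + -C) ≤ f z - ⟪w, z⟫ := by
    have hpz := mul_le_mul_of_nonneg_left (hx₀.inner_sub_le z) (sub_nonneg.2 ht1)
    have hqz := mul_le_mul_of_nonneg_left (hgrowth z) ht.le
    rw [hw, inner_add_left, real_inner_smul_left, real_inner_smul_left, real_inner_comm z p]
    linarith
  have hcoercive : Filter.Tendsto (fun z => f z - ⟪w, z⟫) (Filter.cocompact E) Filter.atTop :=
    Filter.tendsto_atTop_mono hlow <| Filter.tendsto_atTop_add_const_left _ _ <|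
      (Filter.tendsto_atTop_add_const_right _ _ <|
        tendsto_norm_cocompact_atTop.const_mul_atTop hc0).const_mul_atTop ht
  obtain ⟨x, hx⟩ := Continuous.exists_forall_le (by fun_prop) hcoercive
  refine ⟨x, fun y => ?_⟩
  rw [inner_sub_right]
  linarith [hx y]

lemma subgradientRange_subset_closure_interior (hc : Continuous f)
    (hi : (interior (subgradientRange f)).Nonempty) :
    subgradientRange f ⊆ closure (interior (subgradientRange f)) := by
  intro p hp
  obtain ⟨q, hq⟩ := hi
  have hcombo : ∀ t ∈ Ioc (0 : ℝ) 1, (1 - t) • p + t • q ∈ interior (subgradientRange f) := by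
    intro t ht
    have hopen : IsOpenMap fun q' : E => (1 - t) • p + t • q' :=
      (isOpenMap_add_left _).comp (isOpenMap_smul₀ ht.1.ne')
    refine interior_maximal ?_ (hopen _ isOpen_interior) (mem_image_of_mem _ hq)
    rintro _ ⟨q', hq', rfl⟩
    exact combo_mem_subgradientRange hc hp hq' ht.1 ht.2
  have hlim :
      Filter.Tendsto (fun t : ℝ => (1 - t) • p + t • q) (nhdsWithin 0 (Ioi 0)) (nhds p) := by
    have : Continuous fun t : ℝ => (1 - t) • p + t • q := by fun_prop
    simpa using (this.tendsto 0).mono_left nhdsWithin_le_nhds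
  exact mem_closure_of_tendsto hlim
    (Filter.mem_of_superset (Ioc_mem_nhdsGT one_pos) hcombo)

variable [MeasurableSpace E] [BorelSpace E] {μ : Measure E}

/-- `f` solves `det D²f = χ_Ω` in the sense of Alexandrov with respect to `μ`; for Lebesgue measure
on `R2` this is `AlexandrovSol`. -/
def IsAlexandrovSolution (μ : Measure E) (f : E → ℝ) (Ω : Set E) : Prop :=
  ∀ B, MeasurableSet B → μ (⋃ x ∈ B, {p | IsSubgradient f x p}) = μ (B ∩ Ω)

-- A slope outside `closure T` would yield an open set of such slopes; those are attained only off
-- the differentiability points of the interior of `Ω`, which the equation forbids.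
lemma subgradientRange_subset_closure [μ.IsAddHaarMeasure] (hf : ConvexOn ℝ univ f) {Ω T : Set E}
    (hΩ : Convex ℝ Ω) (hA : IsAlexandrovSolution μ f Ω) (hT : MapsTo (gradient f) Ω T)
    (hi : (interior (subgradientRange f)).Nonempty) : subgradientRange f ⊆ closure T := by
  have hlip := hf.locallyLipschitz
  refine (subgradientRange_subset_closure_interior hlip.continuous hi).trans
    (closure_minimal ?_ isClosed_closure)
  by_contra hne
  set V := interior (subgradientRange f) \ closure T
  have hVpos : 0 < μ V :=
    (isOpen_interior.sdiff isClosed_closure).measure_pos μ (nonempty_of_not_subset hne)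
  set N : Set E := (interior Ω)ᶜ ∪ {x | ¬DifferentiableAt ℝ f x}
  have hNmeas : MeasurableSet N :=
    isOpen_interior.measurableSet.compl.union (measurableSet_of_differentiableAt ℝ f).compl
  have hNnull : μ (N ∩ Ω) = 0 := by
    refine measure_mono_null ?_ (measure_union_null (hΩ.addHaar_frontier μ)
      (ae_differentiableAt_of_locallyLipschitz hlip))
    rintro x ⟨hx | hx, hxΩ⟩
    · exact Or.inl ⟨subset_closure hxΩ, hx⟩
    · exact Or.inr hx
  have hVN : V ⊆ ⋃ x ∈ N, {p | IsSubgradient f x p} := by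
    rintro p ⟨hp, hpT⟩
    obtain ⟨x, hx⟩ := interior_subset hp
    refine mem_iUnion₂.2 ⟨x, by_contra fun hxN => hpT ?_, hx⟩
    simp only [N, mem_union, mem_compl_iff, mem_ofPred_eq, not_or, not_not] at hxN
    rw [hx.eq_gradient hxN.2]
    exact subset_closure (hT (interior_subset hxN.1))
  exact hVpos.ne' (measure_mono_null hVN (by rw [hA N hNmeas, hNnull]))

lemma subgradientRange_subset_closure_of_image_gradient_eq [μ.IsAddHaarMeasure]
    (hf : ConvexOn ℝ univ f) {Ω T : Set E} (hΩ : Convex ℝ Ω) (hA : IsAlexandrovSolution μ f Ω)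
    {x₀ : E} (h₀ : IsSubgradient f x₀ 0) (himg : gradient f '' Ω = T)
    (hT : (interior T).Nonempty) : subgradientRange f ⊆ closure T := by
  refine subgradientRange_subset_closure hf hΩ hA (mapsTo_iff_image_subset.2 himg.subset)
    (hT.mono (interior_mono fun q hq => ?_))
  obtain ⟨x, -, hx⟩ := exists_isSubgradient_of_mem_image_gradient hf
    hf.locallyLipschitz.continuous h₀ (himg.superset hq)
  exact ⟨x, hx⟩

end SubgradientRange

section Legendre

variable {E : Type*} [NormedAddCommGroup E] [InnerProductSpace ℝ E] {f g : E → ℝ} {S T : Set E}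
  {x y p : E}

/-- `g` is the Legendre transform of `f` on `T`; the supremum is required to exist. -/
def IsLegendreTransformOn (f g : E → ℝ) (T : Set E) : Prop :=
  ∀ y ∈ T, IsLUB (range fun x => ⟪x, y⟫ - f x) (g y)

namespace IsLegendreTransformOn

lemma inner_le_add (h : IsLegendreTransformOn f g T) (hg : Continuous g) (x : E)
    (hy : y ∈ closure T) : ⟪x, y⟫ ≤ f x + g y :=
  le_on_closure (f := fun y => ⟪x, y⟫) (g := fun y => f x + g y)
    (fun y hy => sub_le_iff_le_add'.1 ((h y hy).1 (mem_range_self x)))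
    (by fun_prop) (by fun_prop) hy

lemma add_eq_inner (h : IsLegendreTransformOn f g T) (hg : Continuous g) (hT : Convex ℝ T)
    (hi : (interior T).Nonempty) (hp : IsSubgradient f x p) (hpT : p ∈ closure T) :
    f x + g p = ⟪x, p⟫ := by
  refine le_antisymm ?_ (h.inner_le_add hg x hpT)
  obtain ⟨q, hq⟩ := hi
  have hsegment : ∀ t ∈ Ioo (0 : ℝ) 1,
      g ((1 - t) • p + t • q) ≤ (1 - t) * (⟪x, p⟫ - f x) + t * g q := by
    intro t ht
    have hmem : (1 - t) • p + t • q ∈ T := interior_subset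
      (hT.combo_closure_interior_mem_interior hpT hq (sub_nonneg.2 ht.2.le) ht.1 (by ring))
    refine (h _ hmem).2 ?_
    rintro _ ⟨z, rfl⟩
    have hpz := mul_le_mul_of_nonneg_left (hp.inner_sub_le z) (sub_nonneg.2 ht.2.le)
    have hqz := mul_le_mul_of_nonneg_left
      ((h q (interior_subset hq)).1 (mem_range_self z)) ht.1.le
    beta_reduce at hqz ⊢
    rw [inner_add_right, real_inner_smul_right, real_inner_smul_right]
    linarith
  have hzero : (0 : ℝ) ∈ closure (Ioo (0 : ℝ) 1) := by simp [closure_Ioo]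
  have hle : g p ≤ ⟪x, p⟫ - f x := by
    simpa using le_on_closure hsegment (by fun_prop) (by fun_prop) hzero
  linarith

lemma of_eq_iSup (hg : ∀ y ∈ T, g y = ⨆ x, (⟪x, y⟫ - f x))
    (hT : ∀ y ∈ T, ∃ x, IsSubgradient f x y) : IsLegendreTransformOn f g T := by
  intro y hy
  obtain ⟨x, hx⟩ := hT y hy
  rw [hg y hy]
  exact isLUB_ciSup ⟨_, forall_mem_range.2 hx.inner_sub_le⟩

end IsLegendreTransformOn

lemma inner_le_add_of_mem_closure_source (hf : Continuous f)
    (hyoung : ∀ x, ∀ y ∈ closure T, ⟪x, y⟫ ≤ f x + g y)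
    (hS : ∀ x ∈ S, ∃ y ∈ closure T, IsSubgradient g y x) (hx : x ∈ closure S) (y : E) :
    ⟪x, y⟫ ≤ f x + g y := by
  refine le_on_closure (f := fun x => ⟪x, y⟫) (g := fun x => f x + g y) (fun x hx => ?_)
    (by fun_prop) (by fun_prop) hx
  obtain ⟨y', hy', hsub⟩ := hS x hx
  have hy := hsub.inner_sub_le y
  rw [real_inner_comm, real_inner_comm x y'] at hy
  linarith [hyoung x y' hy']

lemma add_eq_inner_of_dual_subgradient [CompleteSpace E] (hf : ConvexOn ℝ univ f)
    (hc : Continuous f) (heq : ∀ p, IsSubgradient f x p → f x + g p = ⟪x, p⟫)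
    (hyoung : ∀ y, ⟪x, y⟫ ≤ f x + g y) (h : IsSubgradient g y x) : f x + g y = ⟪x, y⟫ := by
  refine le_antisymm ?_ (hyoung y)
  obtain ⟨p, hp⟩ := exists_isSubgradient hf hc x
  have hpy := h.inner_sub_le p
  rw [real_inner_comm, real_inner_comm x y] at hpy
  linarith [heq p hp]

end Legendre

section CentredBodies

open scoped Pointwise

variable {E : Type*} [NormedAddCommGroup E] [NormedSpace ℝ E] [MeasurableSpace E] {μ : Measure E}
  {K S T : Set E} {δ : ℝ} {c z : E}

/-- A bounded convex set of positive measure which is symmetric about the origin. -/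
structure IsSymmetricBody (μ : Measure E) (K : Set E) : Prop where
  convex : Convex ℝ K
  neg_mem : ∀ z ∈ K, -z ∈ K
  isBounded : Bornology.IsBounded K
  measure_ne_zero : μ K ≠ 0

namespace IsSymmetricBody

lemma smul_mem (hK : IsSymmetricBody μ K) (hz : z ∈ K) {a : ℝ} (ha : 0 ≤ a) (ha1 : a ≤ 1) :
    a • z ∈ K := by
  convert hK.convex hz (hK.neg_mem z hz) (a := (1 + a) / 2) (b := (1 - a) / 2) (by linarith)
    (by linarith) (by ring) using 1
  module

lemma inv_smul_mem_smul (hK : IsSymmetricBody μ K) {x : E} {C m r : ℝ} (hm : 0 < m)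
    (hr : 0 < r) (hx : r • x ∈ K) (hC : r⁻¹ / m ≤ C) : C⁻¹ • x ∈ m • K := by
  have hC0 : 0 < C := lt_of_lt_of_le (by positivity) hC
  refine ⟨(C * m * r)⁻¹ • r • x, hK.smul_mem hx (by positivity) (inv_le_one_of_one_le₀ ?_), ?_⟩
  · rwa [div_le_iff₀ hm, inv_le_iff_one_le_mul₀ hr] at hC
  · simp only [smul_smul]
    congr 1
    field_simp

end IsSymmetricBody

/-- The origin is the barycentre of `S`, and `S` is trapped between the translate `c + δ K` and the
dilate `δ⁻¹ K` of a symmetric body `K`. -/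
structure IsCentredBetween (μ : Measure E) (K S : Set E) (δ : ℝ) (c : E) : Prop where
  body : IsSymmetricBody μ K
  pos : 0 < δ
  measurableSet : MeasurableSet S
  barycentre : ∫ x in S, x ∂μ = 0
  inner : c +ᵥ δ • K ⊆ S
  outer : S ⊆ δ⁻¹ • K

variable [FiniteDimensional ℝ E] [BorelSpace E] [μ.IsAddHaarMeasure]

lemma setIntegral_apply_of_symmetric (hTb : Bornology.IsBounded T)
    (hsymm : ∀ y ∈ T, (2 : ℝ) • c - y ∈ T) (g : E →L[ℝ] ℝ) :
    ∫ y in T, g y ∂μ = μ.real T * g c := by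
  have hpre : ((2 : ℝ) • c - ·) ⁻¹' T = T :=
    Subset.antisymm (fun y hy => by simpa using hsymm _ hy) hsymm
  have hint : IntegrableOn g T μ :=
    (g.continuous.continuousOn.integrableOn_compact hTb.isCompact_closure).mono_set subset_closure
  have hconst : IntegrableOn (fun _ => 2 * g c) T μ :=
    integrableOn_const hTb.measure_lt_top.ne
  have hreflect := (Measure.measurePreserving_sub_left μ ((2 : ℝ) • c)).setIntegral_preimage_emb
    (measurableEmbedding_subLeft _) g T
  simp only [hpre, map_sub, map_smul, smul_eq_mul] at hreflect
  rw [integral_sub hconst hint, setIntegral_const, smul_eq_mul] at hreflect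
  linarith

namespace IsCentredBetween

lemma one_add_apply_centre_le (D : IsCentredBetween μ K S δ c) {g : E →L[ℝ] ℝ}
    (hg : ∀ x ∈ S, 0 ≤ 1 + g x) : 1 + g c ≤ δ⁻¹ ^ (2 * Module.finrank ℝ E) := by
  obtain ⟨hK, hδ, hS, hbary, hinner, houter⟩ := D
  set T := c +ᵥ δ • K
  have hSb : Bornology.IsBounded S := (hK.isBounded.smul₀ δ⁻¹).subset houter
  have hTsymm : ∀ y ∈ T, (2 : ℝ) • c - y ∈ T := by
    rintro _ ⟨_, ⟨w, hw, rfl⟩, rfl⟩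
    exact ⟨-(δ • w), ⟨-w, hK.neg_mem w hw, smul_neg δ w⟩, by simp only [vadd_eq_add]; module⟩
  have hgS : IntegrableOn g S μ :=
    (g.continuous.continuousOn.integrableOn_compact hSb.isCompact_closure).mono_set subset_closure
  have h1S : IntegrableOn (fun _ : E => (1 : ℝ)) S μ := integrableOn_const hSb.measure_lt_top.ne
  have hidS : IntegrableOn (fun x : E => x) S μ :=
    (continuous_id.continuousOn.integrableOn_compact hSb.isCompact_closure).mono_set subset_closure
  have hSint : ∫ x in S, (1 + g x) ∂μ = μ.real S := by
    rw [integral_add h1S hgS, g.integral_comp_comm hidS, hbary]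
    simp
  have hTint : ∫ x in T, (1 + g x) ∂μ = (1 + g c) * μ.real T := by
    rw [integral_add (h1S.mono_set hinner) (hgS.mono_set hinner),
      setIntegral_apply_of_symmetric (hSb.subset hinner) hTsymm]
    simp only [setIntegral_const, smul_eq_mul]
    ring
  have hmono : ∫ x in T, (1 + g x) ∂μ ≤ ∫ x in S, (1 + g x) ∂μ :=
    setIntegral_mono_set (h1S.add hgS)
      ((ae_restrict_iff' hS).2 (Filter.Eventually.of_forall hg))
      (Filter.Eventually.of_forall hinner)
  have hTvol : μ.real T = δ ^ Module.finrank ℝ E * μ.real K := by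
    simp [T, Measure.real, measure_vadd, Measure.addHaar_smul, hδ.le, abs_of_pos hδ]
  have hSvol : μ.real S ≤ δ⁻¹ ^ Module.finrank ℝ E * μ.real K := by
    refine (measureReal_mono houter (hK.isBounded.smul₀ δ⁻¹).measure_lt_top.ne).trans_eq ?_
    simp [Measure.real, Measure.addHaar_smul, hδ.le, abs_of_pos hδ]
  have hKpos : 0 < μ.real K := ENNReal.toReal_pos hK.measure_ne_zero hK.isBounded.measure_lt_top.ne
  rw [hSint, hTint, hTvol, ← mul_assoc] at hmono
  have hcδ := le_of_mul_le_mul_right (hmono.trans hSvol) hKpos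
  rwa [two_mul, pow_add, inv_pow, ← div_eq_mul_inv, le_div_iff₀ (by positivity), ← inv_pow]

lemma abs_apply_le (D : IsCentredBetween μ K S δ c) {g : E →L[ℝ] ℝ}
    (hg : ∀ x ∈ S, 0 ≤ 1 + g x) (hz : z ∈ K) :
    |g z| ≤ δ⁻¹ ^ (2 * Module.finrank ℝ E + 1) := by
  have hcentre := D.one_add_apply_centre_le hg
  have hside : ∀ w ∈ K, 0 ≤ 1 + (g c + δ * g w) := fun w hw => by
    simpa using hg _ (D.inner (vadd_mem_vadd_set (smul_mem_smul_set hw)))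
  have hplus := hside z hz
  have hminus := hside (-z) (D.body.neg_mem z hz)
  rw [map_neg] at hminus
  rw [pow_succ, ← div_eq_mul_inv, le_div_iff₀ D.pos, ← abs_of_pos D.pos, ← abs_mul,
    abs_of_pos D.pos, abs_le]
  constructor <;> linarith

-- A functional separating the multiple of `z` from `S` would violate `abs_apply_le`.
lemma smul_mem (D : IsCentredBetween μ K S δ c) (hconv : Convex ℝ S) (hopen : IsOpen S)
    (h0 : 0 ∈ S) (hz : z ∈ K) : (δ ^ (2 * Module.finrank ℝ E + 1) / 2) • z ∈ S := by
  by_contra hnot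
  have hδ := D.pos
  set N := 2 * Module.finrank ℝ E + 1
  obtain ⟨F, hF⟩ := geometric_hahn_banach_open_point hconv hopen hnot
  set a := F ((δ ^ N / 2) • z) with ha
  have ha0 : 0 < a := by simpa using hF 0 h0
  have hbound := D.abs_apply_le (g := -(a⁻¹ • F)) (fun y hy => by
    have : a⁻¹ * F y ≤ 1 := by
      rw [inv_mul_le_iff₀ ha0, mul_one]
      exact (hF y hy).le
    simpa using this) hz
  have hFz : a⁻¹ * F z = 2 * δ⁻¹ ^ N := by
    have hz0 : F z ≠ 0 := fun h => ha0.ne' (by rw [ha, map_smul, h, smul_zero])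
    rw [ha, map_smul, smul_eq_mul, inv_pow]
    field_simp
  rw [neg_apply, smul_apply, smul_eq_mul, hFz, abs_neg,
    abs_of_pos (by positivity)] at hbound
  linarith [show 0 < δ⁻¹ ^ N by positivity]

end IsCentredBetween

end CentredBodies

section Sections

open scoped Pointwise

variable {E : Type*} [NormedAddCommGroup E] [InnerProductSpace ℝ E] {f g u v : E → ℝ}
  {Ω K K' : Set E} {δ h : ℝ} {c c' p q x z : E}

/-- The part of the space where `f` lies below the affine function `⟪p, ·⟫ + h`. -/
def affineSection (f : E → ℝ) (p : E) (h : ℝ) : Set E :=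
  {x | f x < ⟪p, x⟫ + h}

lemma convex_affineSection (hf : ConvexOn ℝ univ f) : Convex ℝ (affineSection f p h) := by
  have hconv : ConvexOn ℝ univ fun y => f y + (-(innerSL ℝ p)) y :=
    hf.add ((-(innerSL ℝ p)).toLinearMap.convexOn convex_univ)
  convert hconv.convex_lt h using 1
  ext y
  simp [affineSection, ← sub_eq_add_neg, sub_lt_iff_lt_add']

lemma isOpen_affineSection (hf : Continuous f) : IsOpen (affineSection f p h) :=
  isOpen_lt hf (by fun_prop)

/-- Up to the factor `C`, the symmetric convex set `K` describes the sublevel set `{u ≤ h}`: it lies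
in `{u ≤ C h}`, so does its translate `c + K ⊆ Ω`, and it absorbs both the part of `{u ≤ h}` in
`closure Ω` and the symmetric part of `{u ≤ h}`. -/
structure IsSectionModel (C h : ℝ) (u : E → ℝ) (Ω K : Set E) (c : E) : Prop where
  convex : Convex ℝ K
  neg_mem : ∀ x ∈ K, -x ∈ K
  le : ∀ x ∈ K, u x ≤ C * h
  add_mem : ∀ x ∈ K, c + x ∈ Ω
  add_le : ∀ x ∈ K, u (c + x) ≤ C * h
  inv_smul_mem : ∀ x ∈ closure Ω, u x ≤ h → C⁻¹ • x ∈ K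
  inv_smul_mem_of_neg : ∀ x, u x ≤ h → u (-x) ≤ h → C⁻¹ • x ∈ K

/-- The sublevel sets of `u` of height at most `1` have models with a common constant. -/
def HasSectionModels (u : E → ℝ) (Ω : Set E) : Prop :=
  ∃ C, 1 ≤ C ∧ ∀ h, 0 < h → h ≤ 1 → ∃ K c, IsSectionModel C h u Ω K c

variable [MeasurableSpace E] {μ : Measure E}

lemma IsCentredBetween.half_smul_mem (D : IsCentredBetween μ K (affineSection f p h) δ c)
    (hf : ConvexOn ℝ univ f) (hf0 : f 0 = 0) (hh : 0 < h) (hx : f x ≤ h) (hx' : f (-x) ≤ h) :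
    (δ / 2) • x ∈ K := by
  have hhalf (y : E) (hy : f y ≤ h) (hpy : 0 ≤ ⟪p, y⟫) : (δ / 2) • y ∈ K := by
    have hmem : (1 / 2 : ℝ) • y ∈ affineSection f p h := by
      have := apply_smul_le_of_convexOn hf hf0 y (a := 1 / 2) (by norm_num) (by norm_num)
      simp only [affineSection, mem_ofPred_eq, real_inner_smul_right]
      linarith
    have := (mem_smul_set_iff_inv_smul_mem₀ (inv_ne_zero D.pos.ne') _ _).1 (D.outer hmem)
    rwa [inv_inv, smul_smul, mul_one_div] at this
  rcases le_total 0 ⟪p, x⟫ with hpx | hpx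
  · exact hhalf x hx hpx
  · simpa using D.body.neg_mem _ (hhalf (-x) hx' (by rwa [inner_neg_right, neg_nonneg]))

variable [FiniteDimensional ℝ E] [BorelSpace E] [μ.IsAddHaarMeasure]

lemma IsCentredBetween.le_mul_height (D : IsCentredBetween μ K (affineSection f p h) δ c)
    (hf0 : ∀ x, 0 ≤ f x) (hh : 0 < h) (hx : x ∈ affineSection f p h) :
    f x ≤ (1 + δ⁻¹ ^ (2 * Module.finrank ℝ E + 2)) * h := by
  obtain ⟨z, hz, rfl⟩ := D.outer hx
  have hbound := D.abs_apply_le (g := h⁻¹ • innerSL ℝ p) (fun y hy => by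
    have hpos : 0 ≤ h⁻¹ * (⟪p, y⟫ + h) :=
      mul_nonneg (inv_pos.2 hh).le ((hf0 y).trans (le_of_lt hy))
    rw [mul_add, inv_mul_cancel₀ hh.ne'] at hpos
    simpa [add_comm] using hpos) hz
  simp only [smul_apply, innerSL_apply_apply, smul_eq_mul] at hbound
  have hpz := (inv_mul_le_iff₀ hh).1 (abs_le.1 hbound).2
  have hlt : f (δ⁻¹ • z) < δ⁻¹ * ⟪p, z⟫ + h := by
    simpa [affineSection, real_inner_smul_right] using hx
  calc f (δ⁻¹ • z) ≤ δ⁻¹ * ⟪p, z⟫ + h := hlt.le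
    _ ≤ δ⁻¹ * (h * δ⁻¹ ^ (2 * Module.finrank ℝ E + 1)) + h := by
        have := (inv_pos.2 D.pos).le
        gcongr
    _ = (1 + δ⁻¹ ^ (2 * Module.finrank ℝ E + 2)) * h := by ring

lemma IsCentredBetween.smul_mem_affineSection
    (D : IsCentredBetween μ K (affineSection f p h) δ c) (hf : ConvexOn ℝ univ f)
    (hf0 : f 0 = 0) (hh : 0 < h) (hz : z ∈ K) :
    (δ ^ (2 * Module.finrank ℝ E + 1) / 2) • z ∈ affineSection f p h :=
  D.smul_mem (convex_affineSection hf) (isOpen_affineSection hf.locallyLipschitz.continuous)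
    (by simpa [affineSection, hf0] using hh) hz

lemma IsCentredBetween.abs_inner_le (D : IsCentredBetween μ K (affineSection g q h) δ c)
    (hg0 : ∀ y, 0 ≤ g y) (hh : 0 < h) {a : ℝ} (ha : 0 ≤ a) (hx : ∀ y, ⟪x, y⟫ ≤ a * h + g y)
    (hz : z ∈ K) :
    |⟪x, z⟫| ≤ δ⁻¹ ^ (2 * Module.finrank ℝ E + 1) *
      (a + (1 + δ⁻¹ ^ (2 * Module.finrank ℝ E + 2))) * h := by
  set b := a + (1 + δ⁻¹ ^ (2 * Module.finrank ℝ E + 2))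
  have hδ := D.pos
  have hb0 : 0 < b := by positivity
  have hbound := D.abs_apply_le (g := -((b * h)⁻¹ • innerSL ℝ x)) (fun y hy => by
    have hxy : ⟪x, y⟫ ≤ b * h := by
      simp only [b]
      linarith [hx y, D.le_mul_height hg0 hh hy]
    have hle : (b * h)⁻¹ * ⟪x, y⟫ ≤ 1 := by rwa [inv_mul_le_iff₀ (by positivity), mul_one]
    simpa using hle) hz
  simp only [neg_apply, smul_apply, smul_eq_mul, innerSL_apply_apply, abs_neg, abs_mul,
    abs_inv, abs_of_pos hb0, abs_of_pos hh] at hbound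
  rw [inv_mul_le_iff₀ (by positivity)] at hbound
  linarith

lemma IsCentredBetween.isSectionModel
    (D : IsCentredBetween μ K (affineSection u p h) δ c)
    (D' : IsCentredBetween μ K' (affineSection v q h) δ c')
    (hu : ConvexOn ℝ univ u) (hu0 : u 0 = 0) (hun : ∀ x, 0 ≤ u x) (hvn : ∀ y, 0 ≤ v y)
    (hh : 0 < h) (hΩ : c +ᵥ δ • K ⊆ Ω)
    (hpolar : ∀ x a, 0 < a → (∀ z ∈ K', |⟪x, z⟫| ≤ a * h) → (2 * a)⁻¹ • x ∈ K)
    (hyoung : ∀ x ∈ closure Ω, ∀ y, ⟪x, y⟫ ≤ u x + v y) {N : ℕ}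
    (hN : N = 2 * Module.finrank ℝ E + 1) {m C : ℝ} (hm : 0 < m) (hmδ : m ≤ δ)
    (hmN : m ≤ δ ^ N / 2) (hC : 1 + δ⁻¹ ^ (N + 1) ≤ C)
    (hC₁ : 2 * (δ⁻¹ ^ N * (1 + (1 + δ⁻¹ ^ (N + 1)))) / m ≤ C) (hC₂ : 2 * δ⁻¹ / m ≤ C) :
    IsSectionModel C h u Ω (m • K) c := by
  have hδ := D.pos
  have hlevel {x : E} (hx : x ∈ affineSection u p h) : u x ≤ C * h := by
    have := D.le_mul_height hun hh hx
    rw [← add_assoc _ 1 1, ← hN] at this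
    exact this.trans (by gcongr)
  have hinner {z : E} (hz : z ∈ K) : c + m • z ∈ c +ᵥ δ • K := by
    refine vadd_mem_vadd_set (mem_smul_set.2 ⟨(m / δ) • z, D.body.smul_mem hz (by positivity)
      ((div_le_one hδ).2 hmδ), ?_⟩)
    rw [smul_smul, mul_div_cancel₀ _ hδ.ne']
  refine ⟨D.body.convex.smul m, ?_, ?_, ?_, ?_, fun x hx hxh => ?_, fun x hxh hxh' => ?_⟩
  · rintro _ ⟨z, hz, rfl⟩
    exact ⟨-z, D.body.neg_mem z hz, smul_neg m z⟩
  · rintro _ ⟨z, hz, rfl⟩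
    have hmem := D.smul_mem_affineSection hu hu0 hh (D.body.smul_mem hz
      (a := m / (δ ^ N / 2)) (by positivity) ((div_le_one (by positivity)).2 hmN))
    rw [← hN, smul_smul, mul_div_cancel₀ _ (by positivity)] at hmem
    exact hlevel hmem
  · rintro _ ⟨z, hz, rfl⟩
    exact hΩ (hinner hz)
  · rintro _ ⟨z, hz, rfl⟩
    exact hlevel (D.inner (hinner hz))
  · have hbound {z : E} (hz : z ∈ K') := D'.abs_inner_le hvn hh zero_le_one
      (fun y => (hyoung x hx y).trans (by gcongr; rwa [one_mul])) hz
    rw [← add_assoc _ 1 1, ← hN] at hbound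
    refine D.body.inv_smul_mem_smul hm (by positivity)
      (hpolar x _ (by positivity) fun z hz => hbound hz) ?_
    rwa [inv_inv]
  · refine D.body.inv_smul_mem_smul hm (by positivity)
      (D.half_smul_mem hu hu0 hh hxh hxh') ?_
    rwa [inv_div, div_eq_mul_inv]

end Sections

section Ellipse

variable {e f x : R2} {A B : ℝ}

lemma exists_orthonormalBasis_pair (he : ‖e‖ = 1) (hf : ‖f‖ = 1) (hef : ⟪e, f⟫ = 0) :
    ∃ b : OrthonormalBasis (Fin 2) ℝ R2, b 0 = e ∧ b 1 = f := by
  have ho : Orthonormal ℝ ![e, f] := by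
    rw [orthonormal_vecCons_iff]
    simp [he, hf, hef]
  have hcard : Fintype.card (Fin 2) = Module.finrank ℝ R2 := by simp
  let b := basisOfOrthonormalOfCardEqFinrank ho hcard
  have hb : (b : Fin 2 → R2) = ![e, f] := coe_basisOfOrthonormalOfCardEqFinrank ho hcard
  refine ⟨b.toOrthonormalBasis (hb ▸ ho), ?_, ?_⟩ <;> simp [hb]

lemma norm_le_abs_inner_add_abs_inner (he : ‖e‖ = 1) (hf : ‖f‖ = 1) (hef : ⟪e, f⟫ = 0) (x : R2) :
    ‖x‖ ≤ |⟪x, e⟫| + |⟪x, f⟫| := by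
  obtain ⟨b, rfl, rfl⟩ := exists_orthonormalBasis_pair he hf hef
  calc ‖x‖ = ‖⟪b 0, x⟫ • b 0 + ⟪b 1, x⟫ • b 1‖ := by
        rw [← Fin.sum_univ_two fun i => ⟪b i, x⟫ • b i, b.sum_repr' x]
    _ ≤ ‖⟪b 0, x⟫ • b 0‖ + ‖⟪b 1, x⟫ • b 1‖ := norm_add_le _ _
    _ = |⟪x, b 0⟫| + |⟪x, b 1⟫| := by simp [norm_smul, real_inner_comm x]

lemma convexOn_sq_div_add_sq_div :
    ConvexOn ℝ univ fun x : R2 => (⟪x, e⟫ / A) ^ 2 + (⟪x, f⟫ / B) ^ 2 := by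
  have hsq (g : R2) (c : ℝ) : ConvexOn ℝ univ fun x : R2 => (⟪x, g⟫ / c) ^ 2 := by
    refine ((even_two.convexOn_pow (𝕜 := ℝ)).comp_linearMap
      (c⁻¹ • (innerSL ℝ g)).toLinearMap).congr fun x _ => ?_
    simp [real_inner_comm x g, div_eq_inv_mul]
  exact (hsq e A).add (hsq f B)

lemma isSymmetricBody_ellipse (he : ‖e‖ = 1) (hf : ‖f‖ = 1) (hef : ⟪e, f⟫ = 0)
    (hA : 0 < A) (hB : 0 < B) : IsSymmetricBody volume (ellipse e f A B) where
  convex := by simpa [ellipse] using convexOn_sq_div_add_sq_div.convex_le 1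
  neg_mem z hz := by simpa [ellipse, inner_neg_left, neg_div] using hz
  isBounded := by
    refine (isBounded_closedBall (x := (0 : R2)) (r := A + B)).subset fun x hx => ?_
    have hxe : |⟪x, e⟫ / A| ≤ 1 := (sq_le_one_iff_abs_le_one _).1
      ((le_add_of_nonneg_right (sq_nonneg _)).trans hx)
    have hxf : |⟪x, f⟫ / B| ≤ 1 := (sq_le_one_iff_abs_le_one _).1
      ((le_add_of_nonneg_left (sq_nonneg _)).trans hx)
    rw [abs_div, abs_of_pos hA, div_le_one hA] at hxe
    rw [abs_div, abs_of_pos hB, div_le_one hB] at hxf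
    rw [mem_closedBall_zero_iff]
    exact (norm_le_abs_inner_add_abs_inner he hf hef x).trans (add_le_add hxe hxf)
  measure_ne_zero := by
    have hopen : IsOpen {x : R2 | (⟪x, e⟫ / A) ^ 2 + (⟪x, f⟫ / B) ^ 2 < 1} :=
      isOpen_lt (by fun_prop) continuous_const
    exact ((hopen.measure_pos volume ⟨0, by simp⟩).trans_le
      (measure_mono fun x hx => le_of_lt (mem_ofPred_eq ▸ hx : _ < _))).ne'

-- Test `z = B e` and `z = A f`.
lemma inv_smul_mem_ellipse (he : ‖e‖ = 1) (hf : ‖f‖ = 1) (hef : ⟪e, f⟫ = 0)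
    (hA : 0 < A) (hB : 0 < B) {a : ℝ} (ha : 0 < a)
    (hx : ∀ z ∈ ellipse f e A B, |⟪x, z⟫| ≤ a * (A * B)) : (2 * a)⁻¹ • x ∈ ellipse e f A B := by
  have hfe : ⟪f, e⟫ = 0 := by rw [real_inner_comm, hef]
  have hxe : |⟪x, e⟫| ≤ a * A := by
    have := hx (B • e) (by simp [ellipse, real_inner_smul_left, hef, he, hB.ne'])
    rw [real_inner_smul_right, abs_mul, abs_of_pos hB] at this
    exact le_of_mul_le_mul_left (by linarith) hB
  have hxf : |⟪x, f⟫| ≤ a * B := by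
    have := hx (A • f) (by simp [ellipse, real_inner_smul_left, hfe, hf, hA.ne'])
    rw [real_inner_smul_right, abs_mul, abs_of_pos hA] at this
    exact le_of_mul_le_mul_left (by linarith) hA
  have hhalf {t R : ℝ} (hR : 0 < R) (ht : |t| ≤ a * R) : ((2 * a)⁻¹ * t / R) ^ 2 ≤ (1 / 2) ^ 2 := by
    rw [sq_le_sq, abs_div, abs_mul, abs_inv, abs_of_pos (by positivity : 0 < 2 * a), abs_of_pos hR,
      abs_of_pos (by norm_num : (0 : ℝ) < 1 / 2), div_le_iff₀ hR, inv_mul_le_iff₀ (by positivity)]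
    linarith
  simp only [ellipse, mem_ofPred_eq, real_inner_smul_left]
  linarith [hhalf hA hxe, hhalf hB hxf]

end Ellipse

section TransportPair

open scoped Pointwise

variable {u v w : R2 → ℝ} {Ω Ω₁ Ω₂ K : Set R2} {δ h : ℝ} {x p : R2}

/-- Some centred section of `w` at the origin of height `h` lies in `δ⁻¹ K`, and contains a
translate of `δ K` which lies in `Ω` as well: the section condition of `S(δ)` for one potential. -/
def HasTrappedSection (δ : ℝ) (w : R2 → ℝ) (Ω : Set R2) (h : ℝ) (K : Set R2) : Prop :=
  ∃ S, IsCentredSection w 0 h S ∧ (∃ c, (fun z => c + δ • z) '' K ⊆ Ω ∩ S) ∧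
    S ⊆ (fun z => δ⁻¹ • z) '' K

lemma HasTrappedSection.exists_isCentredBetween (H : HasTrappedSection δ w Ω h K)
    (hK : IsSymmetricBody volume K) (hδ : 0 < δ) (hw : Continuous w) (hw0 : w 0 = 0) :
    ∃ p c, IsCentredBetween volume K (affineSection w p h) δ c ∧ c +ᵥ δ • K ⊆ Ω := by
  obtain ⟨_, ⟨p, rfl, hbary⟩, ⟨c, hc⟩, hout⟩ := H
  simp only [hw0, sub_zero, zero_add] at hbary hc hout
  have himage : c +ᵥ δ • K = (fun z => c + δ • z) '' K := by
    simp only [← image_smul, ← image_vadd, image_image, vadd_eq_add]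
  rw [← himage] at hc
  exact ⟨p, c, ⟨hK, hδ, (isOpen_affineSection hw).measurableSet, hbary,
    hc.trans inter_subset_right, hout⟩, hc.trans inter_subset_left⟩

lemma hasSectionModels_of_trapped (hδ : 0 < δ) (hu : ConvexOn ℝ univ u) (hv : ConvexOn ℝ univ v)
    (hu0 : u 0 = 0) (hv0 : v 0 = 0) (hun : ∀ x, 0 ≤ u x) (hvn : ∀ x, 0 ≤ v x)
    (hyoung : ∀ x ∈ closure Ω₁, ∀ y, ⟪x, y⟫ ≤ u x + v y)
    (H : ∀ h ∈ Ioc (0 : ℝ) 1, ∃ e f A B, ‖e‖ = 1 ∧ ‖f‖ = 1 ∧ ⟪e, f⟫ = 0 ∧ 0 < A ∧ 0 < B ∧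
      A * B = h ∧ HasTrappedSection δ u Ω₁ h (ellipse e f A B) ∧
      HasTrappedSection δ v Ω₂ h (ellipse f e A B)) : HasSectionModels u Ω₁ := by
  set m := min δ (δ ^ 5 / 2)
  have hm : 0 < m := by positivity
  set a := δ⁻¹ ^ (5 + 1)
  set b := 2 * (δ⁻¹ ^ 5 * (1 + (1 + a))) / m
  have ha : 0 < a := by positivity
  have hb : 0 < b := by positivity
  have hδm : 0 < 2 * δ⁻¹ / m := by positivity
  have hC : 1 + a ≤ 1 + a + b + 2 * δ⁻¹ / m := by linarith
  have hC₁ : b ≤ 1 + a + b + 2 * δ⁻¹ / m := by linarith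
  have hC₂ : 2 * δ⁻¹ / m ≤ 1 + a + b + 2 * δ⁻¹ / m := by linarith
  refine ⟨1 + a + b + 2 * δ⁻¹ / m, by linarith, fun h hh hh1 => ?_⟩
  obtain ⟨e, f, A, B, he, hf, hef, hA, hB, rfl, Hu, Hv⟩ := H h ⟨hh, hh1⟩
  obtain ⟨p, c, D, hΩ⟩ := Hu.exists_isCentredBetween (isSymmetricBody_ellipse he hf hef hA hB) hδ
    hu.locallyLipschitz.continuous hu0
  obtain ⟨q, c', D', -⟩ := Hv.exists_isCentredBetween
    (isSymmetricBody_ellipse hf he (by rwa [real_inner_comm]) hA hB) hδ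
    hv.locallyLipschitz.continuous hv0
  exact ⟨_, c, D.isSectionModel D' hu hu0 hun hvn hh hΩ
    (fun x s hs hx => inv_smul_mem_ellipse he hf hef hA hB hs hx) hyoung (N := 5) (by simp) hm
    (min_le_left _ _) (min_le_right _ _) hC hC₁ hC₂⟩

/-- What the proof uses about a potential `u` transporting `Ω₁` to `Ω₂`, with `v` as Legendre
dual: all slopes lie in `closure Ω₂`, and Young's inequality holds for them with equality. -/
structure TransportPotential (u v : R2 → ℝ) (Ω₁ Ω₂ : Set R2) : Prop where
  convexOn : ConvexOn ℝ univ u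
  convex : Convex ℝ Ω₁
  interior_nonempty : (interior Ω₁).Nonempty
  zero_mem_frontier : (0 : R2) ∈ frontier Ω₁
  alexandrov : IsAlexandrovSolution volume u Ω₁
  apply_zero : u 0 = 0
  isSubgradient_zero : IsSubgradient u 0 0
  mem_closure : ∀ x p, IsSubgradient u x p → p ∈ closure Ω₂
  inner_le_add : ∀ x, ∀ y ∈ closure Ω₂, ⟪x, y⟫ ≤ u x + v y
  add_eq_inner : ∀ x p, IsSubgradient u x p → u x + v p = ⟪x, p⟫
  hasSectionModels : HasSectionModels u Ω₁

/-- A transport potential together with its dual; every statement holds with the roles of `u` and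
`v` exchanged, by `OTPair.swap`. -/
structure OTPair (u v : R2 → ℝ) (Ω₁ Ω₂ : Set R2) : Prop
    extends TransportPotential u v Ω₁ Ω₂ where
  dual : TransportPotential v u Ω₂ Ω₁

namespace OTPair

lemma swap (P : OTPair u v Ω₁ Ω₂) : OTPair v u Ω₂ Ω₁ :=
  ⟨P.dual, P.toTransportPotential⟩

lemma continuous (P : OTPair u v Ω₁ Ω₂) : Continuous u :=
  P.convexOn.locallyLipschitz.continuous

lemma nonneg (P : OTPair u v Ω₁ Ω₂) (x : R2) : 0 ≤ u x := by
  simpa [P.apply_zero] using P.isSubgradient_zero x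

lemma isSubgradient_dual_of_mem_interior (P : OTPair u v Ω₁ Ω₂) (h : IsSubgradient u x p)
    (hp : p ∈ interior Ω₂) : IsSubgradient v p x := by
  refine isSubgradient_of_eventually P.dual.convexOn ?_
  filter_upwards [isOpen_interior.mem_nhds hp] with y hy
  rw [inner_sub_right]
  linarith [P.add_eq_inner x p h, P.inner_le_add x y (subset_closure (interior_subset hy))]

lemma mem_closure_source (P : OTPair u v Ω₁ Ω₂) (h : IsSubgradient u x p)
    (hp : p ∈ interior Ω₂) : x ∈ closure Ω₁ :=
  P.dual.mem_closure _ _ (P.isSubgradient_dual_of_mem_interior h hp)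

end OTPair

lemma InSFamily.otPair (hδ : 0 < δ) {L l : ℝ → ℝ} {e f : ℝ → R2}
    (H : InSFamily δ u v Ω₁ Ω₂ L l e f) : OTPair u v Ω₁ Ω₂ := by
  obtain ⟨hu, hv, hΩ₁, hΩ₂, hi₁, hi₂, h0₁, h0₂, himg, himg', hA, hu0, hsu, hA', hv0, hsv, hsup,
    -, -, hsec⟩ := H
  have huc := hu.locallyLipschitz.continuous
  have hvc := hv.locallyLipschitz.continuous
  have hslope' : ∀ x ∈ Ω₁, ∃ y ∈ insert 0 Ω₂, IsSubgradient v y x := fun x hx =>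
    exists_isSubgradient_of_mem_image_gradient hv hvc hsv (himg'.superset hx)
  have hmem : ∀ x p, IsSubgradient u x p → p ∈ closure Ω₂ := fun x p hp =>
    subgradientRange_subset_closure_of_image_gradient_eq hu hΩ₁ hA hsu himg hi₂ ⟨x, hp⟩
  have hmem' : ∀ y x, IsSubgradient v y x → x ∈ closure Ω₁ := fun y x hx =>
    subgradientRange_subset_closure_of_image_gradient_eq hv hΩ₂ hA' hsv himg' hi₁ ⟨y, hx⟩
  have hleg : IsLegendreTransformOn u v Ω₂ := .of_eq_iSup hsup fun q hq => by
    obtain ⟨x, -, hx⟩ :=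
      exists_isSubgradient_of_mem_image_gradient hu huc hsu (himg.superset hq)
    exact ⟨x, hx⟩
  have hyoung : ∀ x, ∀ y ∈ closure Ω₂, ⟪x, y⟫ ≤ u x + v y := fun x _ hy =>
    hleg.inner_le_add hvc x hy
  have heq : ∀ x p, IsSubgradient u x p → u x + v p = ⟪x, p⟫ := fun x p hp =>
    hleg.add_eq_inner hvc hΩ₂ hi₂ hp (hmem x p hp)
  have hyoung₁ : ∀ x ∈ closure Ω₁, ∀ y, ⟪x, y⟫ ≤ u x + v y := fun x hx y =>
    inner_le_add_of_mem_closure_source huc hyoung (fun x hx => (hslope' x hx).imp fun y hy =>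
      ⟨insert_subset (frontier_subset_closure h0₂) subset_closure hy.1, hy.2⟩) hx y
  have hyoung' : ∀ y, ∀ x ∈ closure Ω₁, ⟪y, x⟫ ≤ v y + u x := fun y x hx => by
    rw [real_inner_comm, add_comm]
    exact hyoung₁ x hx y
  have heq' : ∀ y x, IsSubgradient v y x → v y + u x = ⟪y, x⟫ := fun y x h => by
    rw [real_inner_comm, add_comm]
    exact add_eq_inner_of_dual_subgradient hu huc (heq x) (hyoung₁ x (hmem' y x h)) h
  have hun : ∀ x, 0 ≤ u x := fun x => by simpa [hu0] using hsu x
  have hvn : ∀ y, 0 ≤ v y := fun y => by simpa [hv0] using hsv y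
  have hmodel : HasSectionModels u Ω₁ := by
    refine hasSectionModels_of_trapped (Ω₂ := Ω₂) hδ hu hv hu0 hv0 hun hvn hyoung₁ fun h hh => ?_
    obtain ⟨he, hf, hef, hl, hlL, hLl, hSu, hSv⟩ := hsec h hh
    exact ⟨e h, f h, L h, l h, he, hf, hef, hl.trans_le hlL, hl, hLl, hSu, hSv⟩
  have hmodel' : HasSectionModels v Ω₂ := by
    refine hasSectionModels_of_trapped (Ω₂ := Ω₁) hδ hv hu hv0 hu0 hvn hun
      (fun y hy x => by rw [real_inner_comm, add_comm]; exact hyoung x y hy) fun h hh => ?_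
    obtain ⟨he, hf, hef, hl, hlL, hLl, hSu, hSv⟩ := hsec h hh
    exact ⟨f h, e h, L h, l h, hf, he, by rwa [real_inner_comm], hl.trans_le hlL, hl, hLl, hSv, hSu⟩
  exact ⟨⟨hu, hΩ₁, hi₁, h0₁, hA, hu0, hsu, hmem, hyoung, heq, hmodel⟩,
    ⟨hv, hΩ₂, hi₂, h0₂, hA', hv0, hsv, hmem', hyoung', heq', hmodel'⟩⟩

end TransportPair

section Plane

variable {e f m w : R2} {C : Set R2}

lemma eq_of_orthonormal (he : ‖e‖ = 1) (hf : ‖f‖ = 1) (hef : ⟪e, f⟫ = 0) (x : R2) :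
    x = ⟪x, e⟫ • e + ⟪x, f⟫ • f := by
  obtain ⟨b, rfl, rfl⟩ := exists_orthonormalBasis_pair he hf hef
  have hsum := b.sum_repr' x
  rw [Fin.sum_univ_two] at hsum
  rw [real_inner_comm, real_inner_comm (b 1)]
  exact hsum.symm

lemma volume_box (he : ‖e‖ = 1) (hf : ‖f‖ = 1) (hef : ⟪e, f⟫ = 0) (m : R2) {I J : Set ℝ}
    (hI : MeasurableSet I) (hJ : MeasurableSet J) :
    volume {x : R2 | ⟪x - m, e⟫ ∈ I ∧ ⟪x - m, f⟫ ∈ J} = volume I * volume J := by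
  obtain ⟨b, rfl, rfl⟩ := exists_orthonormalBasis_pair he hf hef
  have hcoord := ((EuclideanSpace.volume_preserving_symm_measurableEquiv_toLp (Fin 2)).comp
    b.measurePreserving_repr).comp (measurePreserving_sub_right volume m)
  have hset : {x : R2 | ⟪x - m, b 0⟫ ∈ I ∧ ⟪x - m, b 1⟫ ∈ J} =
      (((MeasurableEquiv.toLp 2 (Fin 2 → ℝ)).symm ∘ b.repr) ∘ fun x => x - m) ⁻¹'
        (univ.pi ![I, J]) := by
    ext x
    simp [Set.mem_pi, Fin.forall_fin_two, b.repr_apply_apply, real_inner_comm, inner_sub_left]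
  have hbox : MeasurableSet (univ.pi ![I, J]) :=
    MeasurableSet.univ_pi fun i => by fin_cases i <;> assumption
  rw [hset, hcoord.measure_preimage hbox.nullMeasurableSet, volume_pi_pi]
  simp [Fin.prod_univ_two]

lemma exists_orthogonal (he : ‖e‖ = 1) : ∃ ν : R2, ‖ν‖ = 1 ∧ ⟪e, ν⟫ = 0 := by
  refine ⟨!₂[-(e 1), e 0], ?_, ?_⟩
  · rw [EuclideanSpace.norm_eq, Fin.sum_univ_two] at he ⊢
    rw [← he]
    simp [add_comm]
  · simp only [PiLp.inner_apply, RCLike.inner_apply, conj_trivial, Fin.sum_univ_two,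
      Matrix.cons_val_zero, Matrix.cons_val_one]
    ring

lemma exists_orthogonal_toward (hC : (interior C).Nonempty) (m : R2) (he : ‖e‖ = 1) :
    ∃ ν : R2, ‖ν‖ = 1 ∧ ⟪e, ν⟫ = 0 ∧ ∃ w ∈ interior C, 0 < ⟪w - m, ν⟫ := by
  obtain ⟨ν, hν, heν⟩ := exists_orthogonal he
  obtain ⟨w, hw, hne⟩ : ∃ w ∈ interior C, ⟪w - m, ν⟫ ≠ 0 := by
    obtain ⟨w, hw⟩ := hC
    by_contra! hzero
    obtain ⟨r, hr, hball⟩ := Metric.isOpen_iff.1 isOpen_interior w hw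
    have hmem : w + (r / 2) • ν ∈ interior C :=
      hball (by simp [norm_smul, hν, abs_of_pos hr, hr])
    have hstep := hzero _ hmem
    rw [add_sub_right_comm, inner_add_left, hzero w hw, real_inner_smul_left,
      real_inner_self_eq_norm_sq, hν] at hstep
    linarith
  rcases lt_or_gt_of_ne hne with h | h
  · exact ⟨-ν, by rwa [norm_neg], by rw [inner_neg_right, heν, neg_zero], w, hw, by
      rwa [inner_neg_right, neg_pos]⟩
  · exact ⟨ν, hν, heν, w, hw, h⟩

lemma exists_rectangle_mem_of_convex (hC : Convex ℝ C) (he : ‖e‖ = 1) (hf : ‖f‖ = 1)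
    (hef : ⟪e, f⟫ = 0) {ℓ : ℝ} (hℓ : 0 < ℓ) (hseg : ∀ s : ℝ, |s| ≤ 4 * ℓ → m + s • e ∈ C)
    (hw : w ∈ C) (hwf : 0 < ⟪w - m, f⟫) :
    ∃ η > 0, ∀ s t : ℝ, |s| ≤ ℓ → 0 < t → t ≤ η → m + s • e + t • f ∈ C := by
  set α := ⟪w - m, e⟫
  set β := ⟪w - m, f⟫
  have hwexp : w = m + (α • e + β • f) :=
    eq_add_of_sub_eq' (eq_of_orthonormal he hf hef (w - m))
  refine ⟨min (β / 2) (ℓ * β / (|α| + 1)), by positivity, fun s t hs ht htη => ?_⟩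
  have htβ : t ≤ β / 2 := htη.trans (min_le_left _ _)
  have htα : t * (|α| + 1) ≤ ℓ * β :=
    (le_div_iff₀ (by positivity)).1 (htη.trans (min_le_right _ _))
  obtain ⟨θ, hθ⟩ : ∃ θ, t = θ * β := ⟨t / β, (div_mul_cancel₀ t hwf.ne').symm⟩
  have hθ0 : 0 < θ := pos_of_mul_pos_left (hθ ▸ ht) hwf.le
  have hθ1 : θ ≤ 1 / 2 := le_of_mul_le_mul_right (by linarith) hwf
  have hθα : |θ * α| ≤ ℓ := by
    rw [abs_mul, abs_of_pos hθ0]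
    exact le_of_mul_le_mul_right (by rw [hθ] at htα; nlinarith) hwf
  have hs' : |(s - θ * α) / (1 - θ)| ≤ 4 * ℓ := by
    rw [abs_div, abs_of_pos (by linarith : 0 < 1 - θ), div_le_iff₀ (by linarith)]
    calc |s - θ * α| ≤ |s| + |θ * α| := abs_sub _ _
      _ ≤ 4 * ℓ * (1 - θ) := by nlinarith
  -- The point lies on the segment joining `w` to a point of the base.
  convert hC hw (hseg _ hs') hθ0.le (by linarith : 0 ≤ 1 - θ) (by ring) using 1
  rw [hwexp, hθ, smul_add (1 - θ), smul_smul (1 - θ), mul_div_cancel₀ _ (by linarith)]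
  module

end Plane

lemma measure_inter_eq_of_subset_closure {E : Type*} [NormedAddCommGroup E] [NormedSpace ℝ E]
    [FiniteDimensional ℝ E] [MeasurableSpace E] [BorelSpace E] {μ : Measure E}
    [μ.IsAddHaarMeasure] {Ω R : Set E} (hΩ : Convex ℝ Ω) (hR : R ⊆ closure Ω) :
    μ (R ∩ Ω) = μ R := by
  have hfrontier : ∀ᵐ x ∂μ, x ∉ frontier Ω :=
    measure_eq_zero_iff_ae_notMem.1 (hΩ.addHaar_frontier μ)
  refine measure_congr ?_
  filter_upwards [hfrontier] with x hx
  exact propext ⟨And.left, fun hxR =>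
    ⟨hxR, by_contra fun hxΩ => hx ⟨hR hxR, fun h => hxΩ (interior_subset h)⟩⟩⟩

section FlatSegment

variable {E : Type*} [NormedAddCommGroup E] [InnerProductSpace ℝ E] {u : E → ℝ}
  {m e ν p q : E} {r s t : ℝ}

/-- `u` is constant on the segment of direction `e` and radius `r` centred at `m`. -/
def IsFlatSegment (u : E → ℝ) (m e : E) (r : ℝ) : Prop :=
  ∀ s, |s| ≤ r → u (m + s • e) = u m

namespace IsFlatSegment

lemma isSubgradient (H : IsFlatSegment u m e r) (hs : |s| ≤ r) (hp : IsSubgradient u m p)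
    (hpe : ⟪p, e⟫ = 0) : IsSubgradient u (m + s • e) p := by
  intro y
  have hy := hp y
  rw [H s hs, ← sub_sub, inner_sub_right, real_inner_smul_right, hpe]
  linarith

lemma inner_eq_zero (H : IsFlatSegment u m e r) (hs : |s| < r)
    (hq : IsSubgradient u (m + s • e) q) : ⟪q, e⟫ = 0 := by
  have hstep (t : ℝ) (ht : |s + t| ≤ r) : t * ⟪q, e⟫ ≤ 0 := by
    have hst := hq (m + (s + t) • e)
    rw [H s hs.le, H _ ht, add_smul, add_sub_add_left_eq_sub, add_sub_cancel_left,
      real_inner_smul_right] at hst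
    linarith
  have hright := hstep (r - |s|) ((abs_add_le _ _).trans
    (by rw [abs_of_pos (sub_pos.2 hs)]; linarith))
  have hleft := hstep (-(r - |s|)) ((abs_add_le _ _).trans
    (by rw [abs_neg, abs_of_pos (sub_pos.2 hs)]; linarith))
  nlinarith [sub_pos.2 hs]

lemma isSubgradient_centre (H : IsFlatSegment u m e r) (hs : |s| < r)
    (hq : IsSubgradient u (m + s • e) q) : IsSubgradient u m q := by
  intro y
  have hy := hq y
  rw [H s hs.le, ← sub_sub, inner_sub_right, real_inner_smul_right, H.inner_eq_zero hs hq] at hy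
  linarith

variable [FiniteDimensional ℝ E]

-- The slopes along the segment are slopes at its centre; the extreme one of these bounds the slopes
-- beside the segment from below by monotonicity, and from above by semicontinuity.
lemma exists_subgradient_inner_mem (hu : ConvexOn ℝ univ u) (H : IsFlatSegment u m e r)
    {r' ω : ℝ} (hr' : 0 ≤ r') (hr : r' < r) (hν : ‖ν‖ = 1) (hω : 0 < ω) :
    ∃ p, IsSubgradient u m p ∧ ⟪p, e⟫ = 0 ∧ ∃ ρ > 0, ∀ s t : ℝ, |s| ≤ r' → 0 < t → t ≤ ρ →
      ∀ q, IsSubgradient u (m + s • e + t • ν) q → ⟪q, ν⟫ ∈ Icc ⟪p, ν⟫ (⟪p, ν⟫ + ω) := by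
  have hc := hu.locallyLipschitz.continuous
  have hcompact : IsCompact {p | IsSubgradient u m p} := by
    convert (isCompact_subgradient_graph hc (isCompact_singleton (x := m))).image continuous_snd
      using 1
    ext p
    simp
  obtain ⟨p, hp, hpmax⟩ := hcompact.exists_isMaxOn (exists_isSubgradient hu hc m)
    (f := fun q => ⟪q, ν⟫) (by fun_prop)
  have hpe : ⟪p, e⟫ = 0 :=
    H.inner_eq_zero (s := 0) (by rw [abs_zero]; linarith) (by simpa using hp)
  have hbase : IsCompact ((fun s : ℝ => m + s • e) '' Icc (-r') r') :=
    isCompact_Icc.image (by fun_prop)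
  obtain ⟨ρ, hρ, hupper⟩ := exists_forall_subgradient_mem_of_dist_le hc hbase
    (G := {q | ⟪q, ν⟫ < ⟪p, ν⟫ + ω}) (isOpen_lt (by fun_prop) continuous_const) (by
      rintro _ ⟨s, hs, rfl⟩ q hq
      exact (hpmax (H.isSubgradient_centre ((abs_le.2 hs).trans_lt hr) hq)).trans_lt
        (lt_add_of_pos_right _ hω))
  refine ⟨p, hp, hpe, ρ, hρ, fun s t hs ht htρ q hq => ⟨?_, (hupper (m + s • e)
    ⟨s, abs_le.1 hs, rfl⟩ _ (by simpa [norm_smul, hν, abs_of_pos ht] using htρ) q hq).le⟩⟩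
  have hmono := (H.isSubgradient (hs.trans hr.le) hp hpe).inner_sub_nonneg hq
  rw [add_sub_cancel_left, real_inner_smul_right, inner_sub_left] at hmono
  linarith [nonneg_of_mul_nonneg_right hmono ht]

lemma exists_subgradient_bounds (hu : ConvexOn ℝ univ u) (H : IsFlatSegment u m e r)
    {r' ℓ ω : ℝ} (hr' : 0 ≤ r') (hℓ : 0 < ℓ) (hr : r' + ℓ < r) (hν : ‖ν‖ = 1) (hω : 0 < ω) :
    ∃ a, ∃ ρ > 0, ∀ s t : ℝ, |s| ≤ r' → 0 < t → t ≤ ρ →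
      ∀ q, IsSubgradient u (m + s • e + t • ν) q →
        |⟪q, e⟫| ≤ ω * t / ℓ ∧ ⟪q, ν⟫ ∈ Icc a (a + ω) := by
  obtain ⟨p, hp, hpe, ρ, hρ, hnormal⟩ :=
    H.exists_subgradient_inner_mem hu (by positivity : 0 ≤ r' + ℓ) hr hν hω
  refine ⟨⟪p, ν⟫, ρ, hρ, fun s t hs ht htρ q hq =>
    ⟨?_, hnormal s t (by linarith) ht htρ q hq⟩⟩
  have hlower (s : ℝ) : u m + t * ⟪p, ν⟫ ≤ u (m + s • e + t • ν) := by
    have hst := hp (m + s • e + t • ν)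
    rwa [add_assoc, add_sub_cancel_left, inner_add_right, real_inner_smul_right,
      real_inner_smul_right, hpe, mul_zero, zero_add, ← add_assoc] at hst
  have hupper (s : ℝ) (hs : |s| ≤ r' + ℓ) : u (m + s • e + t • ν) ≤ u m + t * (⟪p, ν⟫ + ω) := by
    obtain ⟨q, hq⟩ := exists_isSubgradient hu hu.locallyLipschitz.continuous (m + s • e + t • ν)
    have hqs := hq (m + s • e)
    rw [H s (hs.trans hr.le), sub_add_cancel_left, inner_neg_right, real_inner_smul_right] at hqs
    linarith [mul_le_mul_of_nonneg_left (hnormal s t hs ht htρ q hq).2 ht.le]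
  have hstep (σ : ℝ) (hσ : |σ| = ℓ) : σ * ⟪q, e⟫ ≤ ω * t := by
    have hqσ := hq (m + (s + σ) • e + t • ν)
    rw [add_sub_add_right_eq_sub, add_smul, add_sub_add_left_eq_sub, add_sub_cancel_left,
      real_inner_smul_right, ← add_smul] at hqσ
    linarith [hlower s, hupper (s + σ) ((abs_add_le _ _).trans (by linarith))]
  rw [le_div_iff₀ hℓ]
  rcases abs_cases ⟪q, e⟫ with ⟨habs, -⟩ | ⟨habs, -⟩ <;> rw [habs]
  · linarith [hstep ℓ (abs_of_pos hℓ)]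
  · linarith [hstep (-ℓ) (by rw [abs_neg, abs_of_pos hℓ])]

end IsFlatSegment

end FlatSegment

section NoFlatSegment

variable {u : R2 → ℝ} {Ω : Set R2} {m e : R2}

-- The slopes over a thin rectangle on the segment fill a box of smaller area than the rectangle.
lemma not_isFlatSegment (hu : ConvexOn ℝ univ u) (hΩ : Convex ℝ Ω) (hi : (interior Ω).Nonempty)
    (hA : IsAlexandrovSolution volume u Ω) (he : ‖e‖ = 1) {ℓ : ℝ} (hℓ : 0 < ℓ)
    (hseg : ∀ s : ℝ, |s| ≤ 4 * ℓ → m + s • e ∈ closure Ω) : ¬IsFlatSegment u m e (4 * ℓ) := by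
  intro H
  obtain ⟨ν, hν, heν, w, hw, hwν⟩ := exists_orthogonal_toward hi m he
  obtain ⟨η₀, hη₀, hrect⟩ := exists_rectangle_mem_of_convex hΩ.closure he hν heν hℓ hseg
    (subset_closure (interior_subset hw)) hwν
  obtain ⟨a, ρ, hρ, hbounds⟩ := H.exists_subgradient_bounds hu hℓ.le hℓ (by linarith) hν
    (half_pos hℓ)
  obtain ⟨η, hη, hηη₀, hηρ⟩ : ∃ η > 0, η ≤ η₀ ∧ η ≤ ρ :=
    ⟨min η₀ ρ, lt_min hη₀ hρ, min_le_left _ _, min_le_right _ _⟩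
  set R : Set R2 := {x | ⟪x - m, e⟫ ∈ Icc (-ℓ) ℓ ∧ ⟪x - m, ν⟫ ∈ Ioc 0 η} with hR
  have hRcoord {x : R2} (hx : x ∈ R) :
      ∃ s t : ℝ, |s| ≤ ℓ ∧ 0 < t ∧ t ≤ η ∧ m + s • e + t • ν = x :=
    ⟨⟪x - m, e⟫, ⟪x - m, ν⟫, abs_le.2 hx.1, hx.2.1, hx.2.2, by
      rw [add_assoc, ← eq_of_orthonormal he hν heν, add_sub_cancel]⟩
  have hRmeas : MeasurableSet R :=
    (measurableSet_Icc.preimage (by fun_prop)).inter (measurableSet_Ioc.preimage (by fun_prop))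
  have hRΩ : R ⊆ closure Ω := by
    intro x hx
    obtain ⟨s, t, hs, ht, htη, rfl⟩ := hRcoord hx
    exact hrect s t hs ht (htη.trans hηη₀)
  have hslopes : (⋃ x ∈ R, {p | IsSubgradient u x p}) ⊆
      {q | ⟪q - 0, e⟫ ∈ Icc (-(η / 2)) (η / 2) ∧ ⟪q - 0, ν⟫ ∈ Icc a (a + ℓ / 2)} := by
    refine iUnion₂_subset fun x hx q hq => ?_
    obtain ⟨s, t, hs, ht, htη, rfl⟩ := hRcoord hx
    obtain ⟨htan, hnor⟩ := hbounds s t hs ht (htη.trans hηρ) q hq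
    have hle : ℓ / 2 * t / ℓ ≤ η / 2 := by
      rw [div_le_iff₀ hℓ]
      nlinarith
    simp only [mem_ofPred_eq, sub_zero]
    exact ⟨abs_le.1 (htan.trans hle), hnor⟩
  have harea : volume R ≤ volume (⋃ x ∈ R, {p | IsSubgradient u x p}) := by
    rw [hA R hRmeas, measure_inter_eq_of_subset_closure hΩ hRΩ]
  have hfinal := harea.trans (measure_mono hslopes)
  rw [hR, volume_box he hν heν m measurableSet_Icc measurableSet_Ioc,
    volume_box he hν heν 0 measurableSet_Icc measurableSet_Icc, Real.volume_Icc, Real.volume_Icc,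
    Real.volume_Icc, Real.volume_Ioc, ← ENNReal.ofReal_mul (by linarith),
    ← ENNReal.ofReal_mul (by linarith), ENNReal.ofReal_le_ofReal_iff (by ring_nf; positivity)]
    at hfinal
  nlinarith [mul_pos hℓ hη]

lemma eq_of_const_on_segment (hu : ConvexOn ℝ univ u) (hΩ : Convex ℝ Ω)
    (hi : (interior Ω).Nonempty) (hA : IsAlexandrovSolution volume u Ω) {x₀ x₁ : R2}
    (h₀ : x₀ ∈ closure Ω) (h₁ : x₁ ∈ closure Ω)
    (hconst : ∀ x ∈ segment ℝ x₀ x₁, u x = u x₀) : x₀ = x₁ := by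
  by_contra hne
  set n := ‖x₁ - x₀‖ with hndef
  have hn : 0 < n := norm_pos_iff.2 (sub_ne_zero.2 (Ne.symm hne))
  have hpoint (s : ℝ) (hs : |s| ≤ 4 * (n / 8)) :
      midpoint ℝ x₀ x₁ + s • (n⁻¹ • (x₁ - x₀)) ∈ segment ℝ x₀ x₁ := by
    have hsn : |s / n| ≤ 1 / 2 := by
      rw [abs_div, abs_of_pos hn, div_le_iff₀ hn]
      linarith
    obtain ⟨hlo, hhi⟩ := abs_le.1 hsn
    refine ⟨1 / 2 - s / n, 1 / 2 + s / n, by linarith, by linarith, by ring, ?_⟩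
    rw [midpoint_eq_smul_add, smul_smul, ← div_eq_mul_inv, invOf_eq_inv]
    module
  refine not_isFlatSegment hu hΩ hi hA (m := midpoint ℝ x₀ x₁) (e := n⁻¹ • (x₁ - x₀))
    (by rw [norm_smul, norm_inv, Real.norm_of_nonneg hn.le, ← hndef, inv_mul_cancel₀ hn.ne'])
    (ℓ := n / 8) (by positivity)
    (fun s hs => hΩ.closure.segment_subset h₀ h₁ (hpoint s hs)) fun s hs => ?_
  rw [hconst _ (hpoint s hs), hconst _ (midpoint_mem_segment _ _)]

end NoFlatSegment

section Comparison

open scoped Pointwise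

variable {E : Type*} [NormedAddCommGroup E] [InnerProductSpace ℝ E] [FiniteDimensional ℝ E]
  {u w U : E → ℝ} {P Ω : Set E} {x p : E}

lemma exists_isSubgradient_of_lt (hw : ConvexOn ℝ univ w) (hP : IsOpen P)
    (hPb : Bornology.IsBounded P) (hbd : ∀ y ∈ closure P, w y < U y → y ∈ P) (hx : x ∈ P)
    (hlt : w x < U x) (hp : IsSubgradient U x p) :
    ∃ y ∈ P, w y < U y ∧ IsSubgradient w y p := by
  have hwc : Continuous w := hw.locallyLipschitz.continuous
  obtain ⟨y, hy, hmin⟩ := hPb.isCompact_closure.exists_isMinOn ⟨x, subset_closure hx⟩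
    (f := fun y => w y - ⟪p, y⟫) (by fun_prop)
  have hmin' : ∀ z ∈ closure P, w y - ⟪p, y⟫ ≤ w z - ⟪p, z⟫ := fun z hz => hmin hz
  have hyU : w y < U y := by
    have hxy := hp y
    rw [inner_sub_right] at hxy
    linarith [hmin' x (subset_closure hx)]
  have hyP := hbd y hy hyU
  refine ⟨y, hyP, hyU, isSubgradient_of_eventually hw ?_⟩
  filter_upwards [hP.mem_nhds hyP] with z hz
  rw [inner_sub_right]
  linarith [hmin' z (subset_closure hz)]

lemma exists_dilation_gt (hu : Continuous u) (hPb : Bornology.IsBounded P) (hx : x ∈ P)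
    {a : ℝ} (ha : a < u x) :
    ∃ κ > 0, ∃ B, a < (1 + κ) * u x - κ * B ∧
      ∀ y ∈ closure P, (1 + κ) * u y - κ * B ≤ u y := by
  obtain ⟨z, -, hmax⟩ :=
    hPb.isCompact_closure.exists_isMaxOn ⟨x, subset_closure hx⟩ hu.continuousOn
  have hle : ∀ y ∈ closure P, u y ≤ u z := fun y hy => hmax hy
  have hden : 0 < 2 * (u z - u x + 1) := by linarith [hle x (subset_closure hx)]
  have hκ : 0 < (u x - a) / (2 * (u z - u x + 1)) := div_pos (sub_pos.2 ha) hden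
  refine ⟨_, hκ, u z, ?_, fun y hy => ?_⟩
  · have := div_mul_cancel₀ (u x - a) hden.ne'
    linarith
  · linarith [mul_le_mul_of_nonneg_left (hle y hy) hκ.le]

lemma det_adjoint_eq (A : E →ₗ[ℝ] E) : LinearMap.det (LinearMap.adjoint A) = LinearMap.det A := by
  let b := stdOrthonormalBasis ℝ E
  rw [← LinearMap.det_toMatrix b.toBasis, ← LinearMap.det_toMatrix b.toBasis,
    LinearMap.toMatrix_adjoint, Matrix.det_conjTranspose, star_trivial]

lemma IsSubgradient.of_comp_equiv {A : E ≃ₗ[ℝ] E} {M : ℝ}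
    (hp : IsSubgradient (fun y => u (A y) + M) x p) :
    ∃ q, IsSubgradient u (A x) q ∧ LinearMap.adjoint (A : E →ₗ[ℝ] E) q = p := by
  refine ⟨LinearMap.adjoint (A.symm : E →ₗ[ℝ] E) p, fun z => ?_, ext_inner_right ℝ fun z => ?_⟩
  · have hz := hp (A.symm z)
    simp only [LinearEquiv.apply_symm_apply] at hz
    rw [LinearMap.adjoint_inner_left, map_sub, LinearEquiv.coe_coe, LinearEquiv.symm_apply_apply]
    linarith
  · simp only [LinearMap.adjoint_inner_left, LinearEquiv.coe_coe, LinearEquiv.symm_apply_apply]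

variable [MeasurableSpace E] [BorelSpace E] {μ : Measure E}

-- Slopes of a slight dilation of `u` over the set where it exceeds `w` are slopes of `w` there,
-- but there are too many of them.
theorem le_of_measure_subgradients_le [Nontrivial E] [μ.IsAddHaarMeasure]
    (hu : ConvexOn ℝ univ u) (hA : IsAlexandrovSolution μ u Ω) (hw : ConvexOn ℝ univ w)
    (hP : IsOpen P) (hPb : Bornology.IsBounded P)
    (hmeas : ∀ O ⊆ P, IsOpen O → μ (⋃ x ∈ O, {p | IsSubgradient w x p}) ≤ μ (O ∩ Ω))
    (hbd : ∀ y ∈ closure P, y ∉ P → u y ≤ w y) (hx : x ∈ P) (hxΩ : x ∈ interior Ω) :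
    u x ≤ w x := by
  by_contra! hlt
  have huc : Continuous u := hu.locallyLipschitz.continuous
  have hwc : Continuous w := hw.locallyLipschitz.continuous
  obtain ⟨κ, hκ, B, hxκ, hκB⟩ := exists_dilation_gt huc hPb hx hlt
  set O : Set E := P ∩ {y | w y < (1 + κ) * u y - κ * B}
  have hO : IsOpen O := hP.inter (isOpen_lt hwc (by fun_prop))
  have hslopes : (1 + κ) • (⋃ y ∈ O, {p | IsSubgradient u y p}) ⊆
      ⋃ y ∈ O, {p | IsSubgradient w y p} := by
    rintro _ ⟨p, hp, rfl⟩
    obtain ⟨y, hy, hyp⟩ := mem_iUnion₂.1 hp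
    obtain ⟨z, hzP, hzlt, hzp⟩ := exists_isSubgradient_of_lt hw hP hPb
      (U := fun y => (1 + κ) * u y - κ * B) (p := (1 + κ) • p)
      (fun y hy hylt => by_contra fun hyP =>
        absurd (hylt.trans_le (hκB y hy)) (hbd y hy hyP).not_gt) hy.1 hy.2 (fun z => by
          have hz := mul_le_mul_of_nonneg_left (hyp z) (by positivity : 0 ≤ 1 + κ)
          rw [real_inner_smul_left]
          linarith)
    exact mem_iUnion₂.2 ⟨z, ⟨hzP, hzlt⟩, hzp⟩
  have hle := (measure_mono hslopes).trans (hmeas O inter_subset_left hO)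
  rw [Measure.addHaar_smul, hA O hO.measurableSet] at hle
  have hfin : μ (O ∩ Ω) ≠ ⊤ :=
    (hPb.subset (inter_subset_left.trans inter_subset_left)).measure_lt_top.ne
  have hpos : μ (O ∩ Ω) ≠ 0 :=
    ((hO.inter isOpen_interior).measure_pos μ ⟨x, ⟨hx, hxκ⟩, hxΩ⟩ |>.trans_le
      (measure_mono (inter_subset_inter_right _ interior_subset))).ne'
  refine hle.not_gt ?_
  conv_lhs => rw [← one_mul (μ (O ∩ Ω))]
  refine ENNReal.mul_lt_mul_left hpos hfin ?_
  rw [ENNReal.one_lt_ofReal, abs_of_pos (by positivity)]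
  exact one_lt_pow₀ (by linarith) Module.finrank_pos.ne'

lemma measure_subgradients_comp_le [μ.IsAddHaarMeasure] (hA : IsAlexandrovSolution μ u Ω)
    {A : E ≃ₗ[ℝ] E} (hdet : |LinearMap.det (A : E →ₗ[ℝ] E)| = 1) {O : Set E} (hO : IsOpen O)
    (hOΩ : ∀ x ∈ O, A x ∈ Ω → x ∈ Ω) (M : ℝ) :
    μ (⋃ x ∈ O, {p | IsSubgradient (fun y => u (A y) + M) x p}) ≤ μ (O ∩ Ω) := by
  have hpreserve {B : E →ₗ[ℝ] E} (hB : |LinearMap.det B| = 1) (S : Set E) : μ (B '' S) = μ S := by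
    rw [Measure.addHaar_image_linearMap, hB, ENNReal.ofReal_one, one_mul]
  have hAO : IsOpen (A '' O) := A.toContinuousLinearEquiv.toHomeomorph.isOpen_image.2 hO
  have hslopes : (⋃ x ∈ O, {p | IsSubgradient (fun y => u (A y) + M) x p}) ⊆
      LinearMap.adjoint (A : E →ₗ[ℝ] E) '' (⋃ x ∈ A '' O, {p | IsSubgradient u x p}) := by
    refine iUnion₂_subset fun x hx p hp => ?_
    obtain ⟨q, hq, hqp⟩ := hp.of_comp_equiv
    exact ⟨q, mem_iUnion₂.2 ⟨A x, mem_image_of_mem A hx, hq⟩, hqp⟩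
  have himage : A '' O ∩ Ω ⊆ A '' (O ∩ Ω) := by
    rintro _ ⟨⟨x, hx, rfl⟩, hxΩ⟩
    exact mem_image_of_mem A ⟨hx, hOΩ x hx hxΩ⟩
  calc μ (⋃ x ∈ O, {p | IsSubgradient (fun y => u (A y) + M) x p})
      ≤ μ (LinearMap.adjoint (A : E →ₗ[ℝ] E) '' (⋃ x ∈ A '' O, {p | IsSubgradient u x p})) :=
        measure_mono hslopes
    _ = μ (A '' O ∩ Ω) := by rw [hpreserve (by rwa [det_adjoint_eq]), hA _ hAO.measurableSet]
    _ ≤ μ ((A : E →ₗ[ℝ] E) '' (O ∩ Ω)) := measure_mono himage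
    _ = μ (O ∩ Ω) := hpreserve hdet _

theorem le_comp_linearMap_add_of_frontier [Nontrivial E] [μ.IsAddHaarMeasure]
    (hu : ConvexOn ℝ univ u) (hA : IsAlexandrovSolution μ u Ω) {A : E →ₗ[ℝ] E}
    (hdet : |LinearMap.det A| = 1) (hP : IsOpen P) (hPb : Bornology.IsBounded P)
    (hPΩ : ∀ x ∈ P, A x ∈ Ω → x ∈ Ω) {M : ℝ}
    (hbd : ∀ x ∈ closure P, x ∉ P → u x ≤ u (A x) + M) (hx : x ∈ P) (hxΩ : x ∈ interior Ω) :
    u x ≤ u (A x) + M := by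
  have hdet0 : LinearMap.det A ≠ 0 := abs_pos.1 (hdet ▸ one_pos)
  have hw : ConvexOn ℝ univ fun y => u (A y) + M :=
    (hu.comp_linearMap A).add (convexOn_const M convex_univ)
  exact le_of_measure_subgradients_le hu hA hw hP hPb
    (fun O hOP hO => measure_subgradients_comp_le hA (A := A.equivOfDetNeZero hdet0) hdet hO
      (fun x hx => hPΩ x (hOP hx)) M) hbd hx hxΩ

end Comparison

section ConvexBoundary

variable {E : Type*} [NormedAddCommGroup E] [NormedSpace ℝ E] {f : E → ℝ} {S : Set E} {y z : E}

lemma add_smul_mem_interior_of_zero_mem_closure (hS : Convex ℝ S) (h0 : (0 : E) ∈ closure S)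
    (hy : y ∈ interior S) (hz : z ∈ closure S) {a b : ℝ} (ha : 0 < a) (hb : 0 ≤ b)
    (hab : a + b ≤ 1) : a • y + b • z ∈ interior S := by
  rcases hb.eq_or_lt with rfl | hb
  · rw [zero_smul]
    simpa using hS.combo_interior_closure_mem_interior hy h0 ha (sub_nonneg.2 (by linarith))
      (add_sub_cancel a 1)
  have hsum : 0 < a + b := by positivity
  have hmem := hS.combo_interior_closure_mem_interior hy hz (div_pos ha hsum)
    (div_nonneg hb.le hsum.le) (by field_simp)
  have hscaled := hS.combo_interior_closure_mem_interior hmem h0 hsum (sub_nonneg.2 hab)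
    (add_sub_cancel _ _)
  rwa [smul_zero, add_zero, smul_add, smul_smul, smul_smul, mul_div_cancel₀ _ hsum.ne',
    mul_div_cancel₀ _ hsum.ne'] at hscaled

lemma smul_mem_interior_of_le (hS : Convex ℝ S) (h0 : (0 : E) ∈ closure S) {a b : ℝ} (ha : 0 < a)
    (hab : a ≤ b) (hy : b • y ∈ interior S) : a • y ∈ interior S := by
  have hb : 0 < b := ha.trans_le hab
  have hmem := add_smul_mem_interior_of_zero_mem_closure hS h0 hy h0 (div_pos ha hb) le_rfl
    (by rwa [add_zero, div_le_one hb])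
  rwa [smul_smul, div_mul_cancel₀ _ hb.ne', smul_zero, add_zero] at hmem

lemma exists_mem_sphere_apply_le (hf : ConvexOn ℝ univ f) (hf0 : f 0 = 0) (hS : Convex ℝ S)
    (h0 : (0 : E) ∈ S) (hy : y ∈ S) (hfy : 0 ≤ f y) {r : ℝ} (hr : 0 < r) (hry : r ≤ ‖y‖) :
    ∃ y' ∈ sphere (0 : E) r ∩ S, f y' ≤ f y := by
  have hypos : 0 < ‖y‖ := hr.trans_le hry
  have hratio : r / ‖y‖ ≤ 1 := (div_le_one hypos).2 hry
  refine ⟨(r / ‖y‖) • y, ⟨?_, hS.smul_mem_of_zero_mem h0 hy ⟨by positivity, hratio⟩⟩, ?_⟩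
  · rw [mem_sphere_zero_iff_norm, norm_smul, norm_div, norm_norm, Real.norm_of_nonneg hr.le,
      div_mul_cancel₀ _ hypos.ne']
  · exact (apply_smul_le_of_convexOn hf hf0 y (by positivity) hratio).trans
      (mul_le_of_le_one_left hfy hratio)

lemma exists_add_smul_mem_interior (hy : y ∈ interior S) (d : E) :
    ∃ τ > 0, ∀ s : ℝ, |s| ≤ τ → y + s • d ∈ interior S := by
  have hnhds : ∀ᶠ s : ℝ in nhds 0, y + s • d ∈ interior S :=
    ContinuousAt.eventually_mem (by fun_prop) (by simpa using isOpen_interior.mem_nhds hy)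
  obtain ⟨τ, hτ, h⟩ := nhds_basis_closedBall.eventually_iff.1 hnhds
  exact ⟨τ, hτ, fun s hs => h (by simpa using hs)⟩

end ConvexBoundary

lemma inner_nonneg_of_mem_closure {E : Type*} [NormedAddCommGroup E] [InnerProductSpace ℝ E]
    {S : Set E} {d x : E} (h : ∀ x ∈ S, 0 ≤ ⟪x, d⟫) (hx : x ∈ closure S) : 0 ≤ ⟪x, d⟫ :=
  closure_minimal (t := {x | 0 ≤ ⟪x, d⟫}) h (isClosed_le (by fun_prop) (by fun_prop)) hx

lemma IsSectionModel.exists_norm_ge {E : Type*} [NormedAddCommGroup E] [InnerProductSpace ℝ E]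
    {u : E → ℝ} {Ω K : Set E} {c z : E} {C h : ℝ} (M : IsSectionModel C h u Ω K c)
    (hz : u z ≤ h) (hz' : u (-z) ≤ h) : ∃ y ∈ Ω, ‖C⁻¹ • z‖ ≤ ‖y‖ ∧ u y ≤ C * h := by
  have hmem := M.inv_smul_mem_of_neg z hz hz'
  have hneg := M.neg_mem _ hmem
  by_cases hle : ‖C⁻¹ • z‖ ≤ ‖c + C⁻¹ • z‖
  · exact ⟨_, M.add_mem _ hmem, hle, M.add_le _ hmem⟩
  refine ⟨_, M.add_mem _ hneg, ?_, M.add_le _ hneg⟩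
  have htriangle := norm_sub_le (c + C⁻¹ • z) (c + -(C⁻¹ • z))
  rw [add_sub_add_left_eq_sub, sub_neg_eq_add, ← two_smul ℝ, norm_smul, Real.norm_ofNat]
    at htriangle
  linarith

namespace OTPair

variable {u v : R2 → ℝ} {Ω₁ Ω₂ : Set R2} {x z p : R2}

lemma zero_mem_closure (P : OTPair u v Ω₁ Ω₂) : (0 : R2) ∈ closure Ω₁ :=
  frontier_subset_closure P.zero_mem_frontier

lemma pos_of_mem_closure (P : OTPair u v Ω₁ Ω₂) (hx : x ∈ closure Ω₁) (hx0 : x ≠ 0) :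
    0 < u x := by
  by_contra! hle
  refine hx0.symm (eq_of_const_on_segment P.convexOn P.convex P.interior_nonempty P.alexandrov
    P.zero_mem_closure hx fun y hy => ?_)
  have hmax := P.convexOn.le_on_segment (mem_univ _) (mem_univ _) hy
  rw [P.apply_zero, max_eq_left hle] at hmax
  rw [P.apply_zero]
  exact hmax.antisymm (P.nonneg y)

lemma eq_zero_of_isSubgradient_zero (P : OTPair u v Ω₁ Ω₂) (hp : IsSubgradient u 0 p) :
    p = 0 := by
  by_contra h
  have hvp := P.add_eq_inner 0 p hp
  rw [P.apply_zero, inner_zero_left, zero_add] at hvp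
  exact (P.swap.pos_of_mem_closure (P.mem_closure _ _ hp) h).ne' hvp

lemma exists_norm_subgradient_lt (P : OTPair u v Ω₁ Ω₂) {ε : ℝ} (hε : 0 < ε) :
    ∃ ρ > 0, ∀ x, ‖x‖ ≤ ρ → ∀ p, IsSubgradient u x p → ‖p‖ < ε := by
  obtain ⟨ρ, hρ, h⟩ := exists_forall_subgradient_mem_of_dist_le P.continuous
    (isCompact_singleton (x := (0 : R2))) (isOpen_ball (x := (0 : R2)) (ε := ε)) (by
      rintro _ rfl p hp
      rw [P.eq_zero_of_isSubgradient_zero hp]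
      exact mem_ball_self hε)
  exact ⟨ρ, hρ, fun x hx p hp => by simpa using h 0 rfl x (by simpa using hx) p hp⟩

-- On a fixed sphere `u` is bounded below over `closure Ω₁`, whereas models of small sections
-- containing `z` and `-z` would yield points of `Ω₁` outside the sphere with `u` small.
lemma eq_zero_of_apply_eq_zero_of_apply_neg_eq_zero (P : OTPair u v Ω₁ Ω₂) (hz : u z = 0)
    (hz' : u (-z) = 0) : z = 0 := by
  by_contra hz0
  obtain ⟨C, hC, hmodels⟩ := P.hasSectionModels
  have hC0 : 0 < C := by linarith
  have hr : 0 < ‖C⁻¹ • z‖ := norm_pos_iff.2 (smul_ne_zero (inv_ne_zero hC0.ne') hz0)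
  set S : Set R2 := sphere 0 ‖C⁻¹ • z‖ ∩ closure Ω₁
  have hsmall (h : ℝ) (hh : 0 < h) (hh1 : h ≤ 1) : ∃ y ∈ S, u y ≤ C * h := by
    obtain ⟨K, c, M⟩ := hmodels h hh hh1
    obtain ⟨y, hy, hle, hyC⟩ := M.exists_norm_ge (hz.trans_le hh.le) (hz'.trans_le hh.le)
    obtain ⟨y', hy', hle'⟩ := exists_mem_sphere_apply_le P.convexOn P.apply_zero P.convex.closure
      P.zero_mem_closure (subset_closure hy) (P.nonneg y) hr hle
    exact ⟨y', hy', hle'.trans hyC⟩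
  have hS : IsCompact S := (isCompact_sphere _ _).inter_right isClosed_closure
  have hSne : S.Nonempty := (hsmall 1 one_pos le_rfl).imp fun _ h => h.1
  obtain ⟨y, hy, hmin⟩ := hS.exists_isMinOn hSne P.continuous.continuousOn
  have hypos : 0 < u y := P.pos_of_mem_closure hy.2 (ne_of_mem_sphere hy.1 hr.ne')
  obtain ⟨y', hy', hle⟩ := hsmall (min 1 (u y / (2 * C))) (by positivity) (min_le_left _ _)
  have hbound : C * min 1 (u y / (2 * C)) ≤ u y / 2 := by
    calc C * min 1 (u y / (2 * C)) ≤ C * (u y / (2 * C)) := by gcongr; exact min_le_right _ _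
      _ = u y / 2 := by field_simp
  linarith [show u y ≤ u y' from hmin hy']

end OTPair

/-- `(a₁, a₂)` and `(b₁, b₂)` are mutually dual frames of the plane, so `x` has coordinates
`⟪x, b₁⟫` and `⟪x, b₂⟫` in the first one. -/
structure DualFrame (a₁ a₂ b₁ b₂ : R2) : Prop where
  inner_fst_fst : ⟪a₁, b₁⟫ = 1
  inner_fst_snd : ⟪a₁, b₂⟫ = 0
  inner_snd_fst : ⟪a₂, b₁⟫ = 0
  inner_snd_snd : ⟪a₂, b₂⟫ = 1

namespace DualFrame

variable {a₁ a₂ b₁ b₂ : R2}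

lemma swap (F : DualFrame a₁ a₂ b₁ b₂) : DualFrame b₁ b₂ a₁ a₂ where
  inner_fst_fst := by rw [real_inner_comm, F.inner_fst_fst]
  inner_fst_snd := by rw [real_inner_comm, F.inner_snd_fst]
  inner_snd_fst := by rw [real_inner_comm, F.inner_fst_snd]
  inner_snd_snd := by rw [real_inner_comm, F.inner_snd_snd]

lemma fst_ne_zero (F : DualFrame a₁ a₂ b₁ b₂) : a₁ ≠ 0 := by
  rintro rfl
  simpa using F.inner_fst_fst

lemma snd_ne_zero (F : DualFrame a₁ a₂ b₁ b₂) : a₂ ≠ 0 := by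
  rintro rfl
  simpa using F.inner_snd_snd

lemma inner_comb_fst (F : DualFrame a₁ a₂ b₁ b₂) (s t : ℝ) : ⟪s • a₁ + t • a₂, b₁⟫ = s := by
  rw [inner_add_left, real_inner_smul_left, real_inner_smul_left, F.inner_fst_fst,
    F.inner_snd_fst, mul_one, mul_zero, add_zero]

lemma inner_comb_snd (F : DualFrame a₁ a₂ b₁ b₂) (s t : ℝ) : ⟪s • a₁ + t • a₂, b₂⟫ = t := by
  rw [inner_add_left, real_inner_smul_left, real_inner_smul_left, F.inner_fst_snd,
    F.inner_snd_snd, mul_one, mul_zero, zero_add]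

lemma exists_basis (F : DualFrame a₁ a₂ b₁ b₂) :
    ∃ B : Module.Basis (Fin 2) ℝ R2, B 0 = a₁ ∧ B 1 = a₂ ∧
      ∀ x, B.repr x 0 = ⟪x, b₁⟫ ∧ B.repr x 1 = ⟪x, b₂⟫ := by
  have hli : LinearIndependent ℝ ![a₁, a₂] := by
    rw [LinearIndependent.pair_iff]
    intro s t hst
    have hs := F.inner_comb_fst s t
    have ht := F.inner_comb_snd s t
    rw [hst, inner_zero_left] at hs ht
    exact ⟨hs.symm, ht.symm⟩
  let B := basisOfLinearIndependentOfCardEqFinrank hli (by simp)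
  have h₁ : B 0 = a₁ := by simp [B]
  have h₂ : B 1 = a₂ := by simp [B]
  refine ⟨B, h₁, h₂, fun x => ?_⟩
  have hx := B.sum_repr x
  rw [Fin.sum_univ_two, h₁, h₂] at hx
  have hfst := F.inner_comb_fst (B.repr x 0) (B.repr x 1)
  have hsnd := F.inner_comb_snd (B.repr x 0) (B.repr x 1)
  rw [hx] at hfst hsnd
  exact ⟨hfst.symm, hsnd.symm⟩

lemma comb_eq_self (F : DualFrame a₁ a₂ b₁ b₂) (x : R2) : ⟪x, b₁⟫ • a₁ + ⟪x, b₂⟫ • a₂ = x := by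
  obtain ⟨B, h₁, h₂, hrepr⟩ := F.exists_basis
  rw [← (hrepr x).1, ← (hrepr x).2, ← h₁, ← h₂, ← Fin.sum_univ_two fun i => B.repr x i • B i,
    B.sum_repr]

lemma det_eq (F : DualFrame a₁ a₂ b₁ b₂) (A : R2 →ₗ[ℝ] R2) :
    LinearMap.det A = ⟪A a₁, b₁⟫ * ⟪A a₂, b₂⟫ - ⟪A a₂, b₁⟫ * ⟪A a₁, b₂⟫ := by
  obtain ⟨B, h₁, h₂, hrepr⟩ := F.exists_basis
  rw [← LinearMap.det_toMatrix B, Matrix.det_fin_two]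
  simp only [LinearMap.toMatrix_apply, h₁, h₂, hrepr]

end DualFrame

lemma exists_apply_add_smul_ne {u : R2 → ℝ} {Ω : Set R2} {y d : R2} (hu : ConvexOn ℝ univ u)
    (hΩ : Convex ℝ Ω) (hA : IsAlexandrovSolution volume u Ω) (hy : y ∈ interior Ω) (hd : d ≠ 0) :
    ∃ s : ℝ, 0 ≤ s ∧ y + s • d ∈ interior Ω ∧ u (y + s • d) ≠ u y := by
  obtain ⟨τ, hτ, hmem⟩ := exists_add_smul_mem_interior hy d
  by_contra! hconst
  refine hd ((smul_eq_zero.1 ?_).resolve_left hτ.ne')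
  refine left_eq_add.1 (eq_of_const_on_segment hu hΩ ⟨y, hy⟩ hA (subset_closure
    (interior_subset hy)) (subset_closure (interior_subset (hmem τ (abs_of_pos hτ).le))) ?_)
  rw [segment_eq_image']
  rintro _ ⟨r, ⟨hr, hr1⟩, rfl⟩
  have hrτ : 0 ≤ r * τ := by positivity
  beta_reduce
  rw [add_sub_cancel_left, smul_smul]
  exact hconst (r * τ) hrτ
    (hmem _ ((abs_of_nonneg hrτ).trans_le (mul_le_of_le_one_left hτ.le hr1)))

/-- Transport domains whose tangent rays at the origin in the directions `a₁` and `-b₂` are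
orthogonal. The frame is sheared so that `a₂` and `b₁` point into the domains; `inner_nonneg` says
that `a₁` and `-b₂` span supporting lines, and `exists_ray_mem` that `-b₂` is a tangent ray. -/
structure PerpConfig (u v : R2 → ℝ) (Ω₁ Ω₂ : Set R2) (a₁ a₂ b₁ b₂ : R2) (k₀ : ℝ) : Prop where
  pair : OTPair u v Ω₁ Ω₂
  frame : DualFrame a₁ a₂ b₁ b₂
  inner_nonneg : ∀ x ∈ Ω₁, 0 ≤ ⟪x, b₂⟫
  dual_inner_nonneg : ∀ y ∈ Ω₂, 0 ≤ ⟪y, a₁⟫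
  scale_pos : 0 < k₀
  scale_smul_mem : k₀ • a₂ ∈ interior Ω₁
  dual_scale_smul_mem : k₀ • b₁ ∈ interior Ω₂
  exists_ray_mem : ∀ σ : ℝ, 0 < σ → ∃ k : ℝ, 0 < k ∧ k • (σ • b₁ - b₂) ∈ interior Ω₂

namespace PerpConfig

variable {u v : R2 → ℝ} {Ω₁ Ω₂ : Set R2} {a₁ a₂ b₁ b₂ x p q : R2} {k₀ s t : ℝ}

lemma slope_nonneg (H : PerpConfig u v Ω₁ Ω₂ a₁ a₂ b₁ b₂ k₀) (hp : IsSubgradient u x p) :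
    0 ≤ ⟪p, a₁⟫ :=
  inner_nonneg_of_mem_closure H.dual_inner_nonneg (H.pair.mem_closure x p hp)

lemma dual_slope_nonneg (H : PerpConfig u v Ω₁ Ω₂ a₁ a₂ b₁ b₂ k₀) (hq : IsSubgradient v x q) :
    0 ≤ ⟪q, b₂⟫ :=
  inner_nonneg_of_mem_closure H.inner_nonneg (H.pair.dual.mem_closure x q hq)

lemma le_add_smul (H : PerpConfig u v Ω₁ Ω₂ a₁ a₂ b₁ b₂ k₀) (x : R2) (hs : 0 ≤ s) :
    u x ≤ u (x + s • a₁) :=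
  le_add_smul_of_subgradients_nonneg H.pair.convexOn H.pair.continuous
    (fun _ _ => H.slope_nonneg) x hs

lemma dual_le_add_smul (H : PerpConfig u v Ω₁ Ω₂ a₁ a₂ b₁ b₂ k₀) (x : R2) (hs : 0 ≤ s) :
    v x ≤ v (x + s • b₂) :=
  le_add_smul_of_subgradients_nonneg H.pair.dual.convexOn H.pair.swap.continuous
    (fun _ _ => H.dual_slope_nonneg) x hs

lemma apply_neg_smul (H : PerpConfig u v Ω₁ Ω₂ a₁ a₂ b₁ b₂ k₀) (ht : 0 ≤ t) :
    u (-(t • a₁)) = 0 := by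
  have hle := H.le_add_smul (-(t • a₁)) ht
  rw [neg_add_cancel, H.pair.apply_zero] at hle
  exact hle.antisymm (H.pair.nonneg _)

lemma apply_smul_pos (H : PerpConfig u v Ω₁ Ω₂ a₁ a₂ b₁ b₂ k₀) (ht : 0 < t) :
    0 < u (t • a₁) :=
  (H.pair.nonneg _).lt_of_ne fun h => smul_ne_zero ht.ne' H.frame.fst_ne_zero
    (H.pair.eq_zero_of_apply_eq_zero_of_apply_neg_eq_zero h.symm (H.apply_neg_smul ht.le))

lemma smul_mem (H : PerpConfig u v Ω₁ Ω₂ a₁ a₂ b₁ b₂ k₀) (hs : 0 < s) (hsk : s ≤ k₀) :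
    s • a₂ ∈ interior Ω₁ :=
  smul_mem_interior_of_le H.pair.convex H.pair.zero_mem_closure hs hsk H.scale_smul_mem

lemma dual_smul_mem (H : PerpConfig u v Ω₁ Ω₂ a₁ a₂ b₁ b₂ k₀) (hs : 0 < s) (hsk : s ≤ k₀) :
    s • b₁ ∈ interior Ω₂ :=
  smul_mem_interior_of_le H.pair.dual.convex H.pair.swap.zero_mem_closure hs hsk
    H.dual_scale_smul_mem

lemma dual_apply_sub_smul (H : PerpConfig u v Ω₁ Ω₂ a₁ a₂ b₁ b₂ k₀)
    (hp : IsSubgradient u (t • a₁) p) (hs : 0 ≤ s) (hmem : p - s • b₂ ∈ closure Ω₂) :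
    v (p - s • b₂) = v p := by
  have hmono := H.dual_le_add_smul (p - s • b₂) hs
  rw [sub_add_cancel] at hmono
  have hyoung := H.pair.inner_le_add (t • a₁) _ hmem
  rw [inner_sub_right, real_inner_smul_left _ (s • b₂), real_inner_smul_right,
    H.frame.inner_fst_snd] at hyoung
  linarith [H.pair.add_eq_inner _ _ hp]

lemma sub_smul_notMem_interior (H : PerpConfig u v Ω₁ Ω₂ a₁ a₂ b₁ b₂ k₀)
    (hp : IsSubgradient u (t • a₁) p) (hs : 0 ≤ s) : p - s • b₂ ∉ interior Ω₂ := by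
  intro hy
  obtain ⟨r, hr, hmem, hne⟩ := exists_apply_add_smul_ne H.pair.dual.convexOn H.pair.dual.convex
    H.pair.dual.alexandrov hy (neg_ne_zero.2 H.frame.swap.snd_ne_zero)
  have hfar : p - s • b₂ + r • -b₂ = p - (s + r) • b₂ := by module
  rw [hfar] at hmem hne
  exact hne ((H.dual_apply_sub_smul hp (add_nonneg hs hr)
    (subset_closure (interior_subset hmem))).trans
    (H.dual_apply_sub_smul hp hs (subset_closure (interior_subset hy))).symm)

lemma apply_sub_smul (H : PerpConfig u v Ω₁ Ω₂ a₁ a₂ b₁ b₂ k₀) (hp : IsSubgradient u x p)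
    (hp₁ : ⟪p, a₁⟫ = 0) (hs : 0 ≤ s) : u (x - s • a₁) = u x := by
  have hmono := H.le_add_smul (x - s • a₁) hs
  have hslope := hp (x - s • a₁)
  rw [sub_add_cancel] at hmono
  rw [sub_sub_cancel_left, inner_neg_right, real_inner_smul_right, hp₁, mul_zero, neg_zero,
    add_zero] at hslope
  exact hmono.antisymm hslope

lemma slope_pos (H : PerpConfig u v Ω₁ Ω₂ a₁ a₂ b₁ b₂ k₀) (hs : 0 ≤ s) (ht : 0 < t) (htk : t ≤ k₀)
    (hp : IsSubgradient u (s • a₁ + t • a₂) p) : 0 < ⟪p, a₁⟫ := by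
  refine (H.slope_nonneg hp).lt_of_ne fun hp₁ => ?_
  obtain ⟨r, hr, -, hne⟩ := exists_apply_add_smul_ne H.pair.convexOn H.pair.convex
    H.pair.alexandrov (H.smul_mem ht htk) (neg_ne_zero.2 H.frame.fst_ne_zero)
  refine hne ?_
  have hbase := H.apply_sub_smul hp hp₁.symm hs
  have hfar := H.apply_sub_smul hp hp₁.symm (add_nonneg hs hr)
  rw [add_sub_cancel_left] at hbase
  rw [hbase, ← hfar]
  congr 1
  module

end PerpConfig

section SlopesOnCompacts

lemma exists_isSubgradient_inner_eq_zero {E : Type*} [NormedAddCommGroup E]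
    [InnerProductSpace ℝ E] {f : E → ℝ} {x p q d : E} (hp : IsSubgradient f x p)
    (hq : IsSubgradient f x q) (hpd : ⟪p, d⟫ ≤ 0) (hqd : 0 ≤ ⟪q, d⟫) :
    ∃ r, IsSubgradient f x r ∧ ⟪r, d⟫ = 0 := by
  rcases hqd.eq_or_lt with hqd | hqd
  · exact ⟨q, hq, hqd.symm⟩
  have hgap : 0 < ⟪q, d⟫ - ⟪p, d⟫ := by linarith
  refine ⟨_, hp.convexCombo hq (a := ⟪q, d⟫ / (⟪q, d⟫ - ⟪p, d⟫))
    (b := -⟪p, d⟫ / (⟪q, d⟫ - ⟪p, d⟫)) (by positivity) (div_nonneg (by linarith) hgap.le) ?_, ?_⟩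
  · field_simp
    ring
  · rw [inner_add_left, real_inner_smul_left, real_inner_smul_left]
    field_simp
    ring

variable {E : Type*} [NormedAddCommGroup E] [InnerProductSpace ℝ E] [FiniteDimensional ℝ E]

lemma isClosed_setOf_exists_subgradient_mem {f : E → ℝ} (hf : Continuous f) {C : Set E}
    (hC : IsClosed C) : IsClosed {x | ∃ p ∈ C, IsSubgradient f x p} := by
  refine IsSeqClosed.isClosed fun x x₀ hx hlim => ?_
  have hK := hlim.isCompact_insert_range
  have hproj := ((isCompact_subgradient_graph hf hK).inter_right
    (hC.preimage continuous_snd)).image continuous_fst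
  obtain ⟨⟨_, p⟩, ⟨⟨-, hp⟩, hpC⟩, rfl⟩ := hproj.isClosed.mem_of_tendsto hlim <|
    .of_forall fun n => by
      obtain ⟨p, hpC, hp⟩ := hx n
      exact ⟨(x n, p), ⟨⟨mem_insert_of_mem _ (mem_range_self n), hp⟩, hpC⟩, rfl⟩
  exact ⟨p, hpC, hp⟩

lemma exists_subgradient_inner_eq_zero_on_path {f : E → ℝ} (hf : ConvexOn ℝ univ f) {γ : ℝ → E}
    (hγ : Continuous γ) {a b : ℝ} (hab : a ≤ b) {p q d : E} (hp : IsSubgradient f (γ a) p)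
    (hpd : ⟪p, d⟫ ≤ 0) (hq : IsSubgradient f (γ b) q) (hqd : 0 ≤ ⟪q, d⟫) :
    ∃ τ ∈ Icc a b, ∃ r, IsSubgradient f (γ τ) r ∧ ⟪r, d⟫ = 0 := by
  have hc : Continuous f := hf.locallyLipschitz.continuous
  have hneg := (isClosed_setOf_exists_subgradient_mem hc (C := {p | ⟪p, d⟫ ≤ 0})
    (isClosed_le (by fun_prop) (by fun_prop))).preimage hγ
  have hpos := (isClosed_setOf_exists_subgradient_mem hc (C := {p | 0 ≤ ⟪p, d⟫})
    (isClosed_le (by fun_prop) (by fun_prop))).preimage hγ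
  obtain ⟨τ, hτ, ⟨p', hpd', hp'⟩, q', hqd', hq'⟩ :=
    isPreconnected_closed_iff.1 isPreconnected_Icc _ _ hneg hpos
      (fun τ _ => by
        obtain ⟨r, hr⟩ := exists_isSubgradient hf hc (γ τ)
        exact (le_total ⟪r, d⟫ 0).imp (⟨r, ·, hr⟩) (⟨r, ·, hr⟩))
      ⟨a, left_mem_Icc.2 hab, p, hpd, hp⟩ ⟨b, right_mem_Icc.2 hab, q, hqd, hq⟩
  exact ⟨τ, hτ, exists_isSubgradient_inner_eq_zero hp' hq' hpd' hqd'⟩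

lemma exists_sq_mul_le_of_isCompact {X : Type*} [TopologicalSpace X] {K : Set X}
    (hK : IsCompact K) {f h : X → ℝ} (hf : ContinuousOn f K) (hh : ContinuousOn h K)
    (hpos : ∀ z ∈ K, 0 < f z) : ∃ g : ℝ, 0 < g ∧ g ≤ 1 ∧ ∀ z ∈ K, g ^ 2 * h z ≤ f z := by
  obtain ⟨N, hN⟩ := hK.exists_bound_of_continuousOn hh
  obtain ⟨m, hm, hmf⟩ : ∃ m > 0, ∀ z ∈ K, m ≤ f z := by
    rcases K.eq_empty_or_nonempty with rfl | hne
    · exact ⟨1, one_pos, by simp⟩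
    obtain ⟨z, hz, hmin⟩ := hK.exists_isMinOn hne hf
    exact ⟨f z, hpos z hz, fun w hw => hmin hw⟩
  have hN0 : 0 < |N| + 1 := by positivity
  refine ⟨min 1 (m / (|N| + 1)), by positivity, min_le_left _ _, fun z hz => ?_⟩
  set g := min 1 (m / (|N| + 1))
  have hg : 0 ≤ g := by positivity
  have hg1 : g ^ 2 ≤ g := pow_le_of_le_one hg (min_le_left _ _) two_ne_zero
  calc g ^ 2 * h z ≤ g ^ 2 * (|N| + 1) := by
        gcongr
        linarith [Real.le_norm_self (h z), hN z hz, le_abs_self N]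
    _ ≤ g * (|N| + 1) := by gcongr
    _ ≤ m := (le_div_iff₀ hN0).1 (min_le_right _ _)
    _ ≤ f z := hmf z hz

end SlopesOnCompacts

/-- The parallelogram of points whose coordinates in a dual frame lie in `[0, ρ]`. -/
def frameBox (b₁ b₂ : R2) (ρ : ℝ) : Set R2 := {x | ⟪x, b₁⟫ ∈ Icc 0 ρ ∧ ⟪x, b₂⟫ ∈ Icc 0 ρ}

namespace DualFrame

variable {a₁ a₂ b₁ b₂ x : R2} {ρ s t : ℝ}

lemma comb_mem_frameBox (F : DualFrame a₁ a₂ b₁ b₂) (hs : s ∈ Icc 0 ρ) (ht : t ∈ Icc 0 ρ) :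
    s • a₁ + t • a₂ ∈ frameBox b₁ b₂ ρ := by
  rw [frameBox, mem_ofPred_eq, F.inner_comb_fst, F.inner_comb_snd]
  exact ⟨hs, ht⟩

lemma norm_le_of_mem_frameBox (F : DualFrame a₁ a₂ b₁ b₂) (hx : x ∈ frameBox b₁ b₂ ρ) :
    ‖x‖ ≤ ρ * (‖a₁‖ + ‖a₂‖) := by
  obtain ⟨⟨hs, hsρ⟩, ht, htρ⟩ := hx
  calc ‖x‖ = ‖⟪x, b₁⟫ • a₁ + ⟪x, b₂⟫ • a₂‖ := by rw [F.comb_eq_self]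
    _ ≤ ⟪x, b₁⟫ * ‖a₁‖ + ⟪x, b₂⟫ * ‖a₂‖ := by
        simpa only [norm_smul, Real.norm_of_nonneg hs, Real.norm_of_nonneg ht] using
          norm_add_le (⟪x, b₁⟫ • a₁) (⟪x, b₂⟫ • a₂)
    _ ≤ ρ * ‖a₁‖ + ρ * ‖a₂‖ := by gcongr
    _ = ρ * (‖a₁‖ + ‖a₂‖) := (mul_add _ _ _).symm

lemma isClosed_frameBox : IsClosed (frameBox b₁ b₂ ρ) :=
  (isClosed_Icc.preimage (by fun_prop : Continuous fun x : R2 => ⟪x, b₁⟫)).inter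
    (isClosed_Icc.preimage (by fun_prop : Continuous fun x : R2 => ⟪x, b₂⟫))

lemma isCompact_frameBox (F : DualFrame a₁ a₂ b₁ b₂) : IsCompact (frameBox b₁ b₂ ρ) :=
  isCompact_of_isClosed_isBounded isClosed_frameBox <|
    isBounded_iff_forall_norm_le.2 ⟨_, fun _ => F.norm_le_of_mem_frameBox⟩

end DualFrame

/-- A frame box of size `ρ` small enough that the column above each point of its lower side enters
`Ω₁` and that the slopes of `u` over it are shorter than `k₀` along `b₁`. -/
structure PerpBox (u v : R2 → ℝ) (Ω₁ Ω₂ : Set R2) (a₁ a₂ b₁ b₂ : R2) (k₀ ρ : ℝ) : Prop where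
  perpConfig : PerpConfig u v Ω₁ Ω₂ a₁ a₂ b₁ b₂ k₀
  size_pos : 0 < ρ
  size_le : ρ ≤ k₀
  column_mem : ∀ s ∈ Icc 0 ρ, s • a₁ + k₀ • a₂ ∈ interior Ω₁
  slope_lt : ∀ x ∈ frameBox b₁ b₂ ρ, ∀ p, IsSubgradient u x p → ⟪p, a₁⟫ < k₀

section

variable {u v : R2 → ℝ} {Ω₁ Ω₂ : Set R2} {a₁ a₂ b₁ b₂ p : R2} {k₀ ρ s t t' : ℝ}

lemma PerpConfig.exists_box (H : PerpConfig u v Ω₁ Ω₂ a₁ a₂ b₁ b₂ k₀) :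
    ∃ ρ, PerpBox u v Ω₁ Ω₂ a₁ a₂ b₁ b₂ k₀ ρ := by
  obtain ⟨τ, hτ, hcolumn⟩ := exists_add_smul_mem_interior H.scale_smul_mem a₁
  have ha₁ : 0 < ‖a₁‖ := norm_pos_iff.2 H.frame.fst_ne_zero
  obtain ⟨r, hr, hslope⟩ := H.pair.exists_norm_subgradient_lt (div_pos H.scale_pos ha₁)
  have hN : 0 < ‖a₁‖ + ‖a₂‖ := by positivity
  have hk := H.scale_pos
  refine ⟨min (min k₀ τ) (r / (‖a₁‖ + ‖a₂‖)), H, by positivity,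
    (min_le_left _ _).trans (min_le_left _ _), fun s hs => ?_, fun x hx p hp => ?_⟩
  · rw [add_comm]
    refine hcolumn s ?_
    rw [abs_of_nonneg hs.1]
    exact hs.2.trans ((min_le_left _ _).trans (min_le_right _ _))
  · have hxr : ‖x‖ ≤ r := (H.frame.norm_le_of_mem_frameBox hx).trans
      ((le_div_iff₀ hN).1 (min_le_right _ _))
    exact (real_inner_le_norm p a₁).trans_lt ((lt_div_iff₀ ha₁).1 (hslope x hxr p hp))

namespace PerpBox

lemma vertical_mem_interior (B : PerpBox u v Ω₁ Ω₂ a₁ a₂ b₁ b₂ k₀ ρ) (hs : s ∈ Icc 0 ρ)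
    (hmem : s • a₁ + t' • a₂ ∈ closure Ω₁) (hlt : t' < t) (htk : t ≤ k₀) :
    s • a₁ + t • a₂ ∈ interior Ω₁ := by
  have hk : 0 < k₀ - t' := by linarith
  have hc : (t - t') / (k₀ - t') * (k₀ - t') = t - t' := div_mul_cancel₀ _ hk.ne'
  have hc0 : 0 < (t - t') / (k₀ - t') := div_pos (by linarith) hk
  have hc1 : (t - t') / (k₀ - t') ≤ 1 := (div_le_one hk).2 (by linarith)
  set c := (t - t') / (k₀ - t')
  convert B.perpConfig.pair.convex.combo_interior_closure_mem_interior (B.column_mem s hs) hmem hc0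
    (sub_nonneg.2 hc1) (add_sub_cancel c 1) using 1
  rw [show t = c * (k₀ - t') + t' by linarith]
  module

lemma slope_fst_pos_on_ray (B : PerpBox u v Ω₁ Ω₂ a₁ a₂ b₁ b₂ k₀ ρ) (ht : 0 < t)
    (hp : IsSubgradient u (t • a₁) p) : 0 < ⟪p, a₁⟫ := by
  have hle := hp 0
  rw [zero_sub, inner_neg_right, real_inner_smul_right, B.perpConfig.pair.apply_zero] at hle
  exact (mul_pos_iff_of_pos_left ht).1 (by linarith [B.perpConfig.apply_smul_pos ht])

lemma slope_snd_neg_on_ray (B : PerpBox u v Ω₁ Ω₂ a₁ a₂ b₁ b₂ k₀ ρ) (ht : 0 < t) (htρ : t ≤ ρ)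
    (hp : IsSubgradient u (t • a₁) p) : ⟪p, a₂⟫ < 0 := by
  by_contra! hp₂
  refine B.perpConfig.sub_smul_notMem_interior hp hp₂ ?_
  have hbox : t • a₁ ∈ frameBox b₁ b₂ ρ := by
    simpa using B.perpConfig.frame.comb_mem_frameBox ⟨ht.le, htρ⟩ ⟨le_rfl, B.size_pos.le⟩
  rw [sub_eq_of_eq_add (B.perpConfig.frame.swap.comb_eq_self p).symm]
  exact B.perpConfig.dual_smul_mem (B.slope_fst_pos_on_ray ht hp) (B.slope_lt _ hbox p hp).le

-- Otherwise the slope along `a₂` vanishes for some `r` on the column below; such an `r` is a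
-- multiple of `b₁`, hence interior to `Ω₂`, so the column is already in `closure Ω₁` there.
lemma exists_nonpos_slope_of_notMem_interior (B : PerpBox u v Ω₁ Ω₂ a₁ a₂ b₁ b₂ k₀ ρ)
    (hs : 0 < s) (hsρ : s ≤ ρ) (ht : 0 ≤ t) (htρ : t ≤ ρ) (hx : s • a₁ + t • a₂ ∉ interior Ω₁) :
    ∃ p, IsSubgradient u (s • a₁ + t • a₂) p ∧ ⟪p, a₂⟫ ≤ 0 := by
  have H := B.perpConfig
  by_contra! hpos
  obtain ⟨p, hp⟩ := exists_isSubgradient H.pair.convexOn H.pair.continuous (s • a₁)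
  obtain ⟨q, hq⟩ := exists_isSubgradient H.pair.convexOn H.pair.continuous (s • a₁ + t • a₂)
  obtain ⟨τ, ⟨hτ, hτt⟩, r, hr, hr₂⟩ := exists_subgradient_inner_eq_zero_on_path H.pair.convexOn
    (γ := fun τ => s • a₁ + τ • a₂) (by fun_prop) ht (by simpa using hp)
    (B.slope_snd_neg_on_ray hs hsρ hp).le hq (hpos q hq).le
  have hτ0 : 0 < τ := hτ.lt_of_ne' (by
    rintro rfl
    exact (B.slope_snd_neg_on_ray hs hsρ (by simpa using hr)).ne hr₂)
  have hτt : τ < t := hτt.lt_of_ne (by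
    rintro rfl
    exact (hpos r hr).ne' hr₂)
  have hτρ : τ ≤ ρ := hτt.le.trans htρ
  have hrmem : r ∈ interior Ω₂ := by
    rw [← H.frame.swap.comb_eq_self r, hr₂, zero_smul, add_zero]
    exact H.dual_smul_mem (H.slope_pos hs.le hτ0 (hτρ.trans B.size_le) hr)
      (B.slope_lt _ (H.frame.comb_mem_frameBox ⟨hs.le, hsρ⟩ ⟨hτ, hτρ⟩) r hr).le
  exact hx (B.vertical_mem_interior ⟨hs.le, hsρ⟩ (H.pair.mem_closure_source hr hrmem) hτt
    (htρ.trans B.size_le))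

end PerpBox

end

lemma le_apply_cos_smul_add_sin_smul {E : Type*} [NormedAddCommGroup E] [InnerProductSpace ℝ E]
    {f : E → ℝ} {x y p : E} {M θ : ℝ} (hp : IsSubgradient f x p) (hM : ‖⟪p, x⟫‖ ≤ M)
    (hy : 0 ≤ ⟪p, y⟫) (hθ : 0 ≤ Real.sin θ) :
    f x ≤ f (Real.cos θ • x + Real.sin θ • y) + M * θ ^ 2 := by
  have hslope := hp (Real.cos θ • x + Real.sin θ • y)
  rw [inner_sub_right, inner_add_right, real_inner_smul_right, real_inner_smul_right] at hslope
  have hM0 : 0 ≤ M := (norm_nonneg _).trans hM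
  have hsecond : (1 - Real.cos θ) * ⟪p, x⟫ ≤ M * θ ^ 2 := by
    calc (1 - Real.cos θ) * ⟪p, x⟫ ≤ (1 - Real.cos θ) * M :=
          mul_le_mul_of_nonneg_left ((Real.le_norm_self _).trans hM)
            (sub_nonneg.2 (Real.cos_le_one θ))
      _ ≤ θ ^ 2 * M := by
          gcongr
          linarith [Real.one_sub_sq_div_two_le_cos (x := θ), sq_nonneg θ]
      _ = M * θ ^ 2 := mul_comm _ _
  linarith [mul_nonneg hθ hy]

lemma le_of_le_add_mul_sq {f : ℝ → ℝ} {M T : ℝ} (hT : 0 ≤ T)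
    (h : ∀ θ τ, 0 ≤ θ → 0 ≤ τ → θ + τ ≤ T → f θ ≤ f (θ + τ) + M * τ ^ 2) : f 0 ≤ f T := by
  have hiter (N : ℕ) : f 0 ≤ f T + M * T ^ 2 / (N + 1) := by
    have hN : (0 : ℝ) < N + 1 := by positivity
    set τ : ℝ := T / (N + 1)
    have hτ0 : 0 ≤ τ := by positivity
    have hτN : (N + 1) * τ = T := mul_div_cancel₀ _ hN.ne'
    have hstep (k : ℕ) (hk : k ≤ N + 1) : f 0 ≤ f (k * τ) + k * (M * τ ^ 2) := by
      induction k with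
      | zero => simp
      | succ k ih =>
        have hkN : ((k : ℝ) + 1) * τ ≤ T := by
          rw [← hτN]
          gcongr
          exact_mod_cast Nat.le_of_succ_le_succ hk
        have hnext := h (k * τ) τ (by positivity) hτ0 (by linarith)
        rw [← add_one_mul] at hnext
        push_cast
        linarith [ih (by omega)]
    have hlast := hstep (N + 1) le_rfl
    push_cast at hlast
    rw [hτN] at hlast
    have hsum : (N + 1) * (M * τ ^ 2) = M * T ^ 2 / (N + 1) := by
      rw [← hτN]
      field_simp
    rwa [hsum] at hlast
  have hlim : Filter.Tendsto (fun N : ℕ => f T + M * T ^ 2 / (N + 1)) Filter.atTop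
      (nhds (f T)) := by
    simpa [div_eq_mul_inv] using
      (tendsto_one_div_add_atTop_nhds_zero_nat.const_mul (M * T ^ 2)).const_add (f T)
  exact ge_of_tendsto' hlim hiter

/-- The quarter turn along the ellipses `(g s)² + t² = const` in the coordinates `(s, t)` of a dual
frame. -/
def ellipticTurn (a₁ a₂ b₁ b₂ : R2) (g : ℝ) : R2 →ₗ[ℝ] R2 :=
  g⁻¹ • (innerₗ R2 b₂).smulRight a₁ - g • (innerₗ R2 b₁).smulRight a₂

/-- The rotation by the angle `θ` along the same ellipses as `ellipticTurn`. -/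
def ellipticRotation (a₁ a₂ b₁ b₂ : R2) (g θ : ℝ) : R2 →ₗ[ℝ] R2 :=
  Real.cos θ • LinearMap.id + Real.sin θ • ellipticTurn a₁ a₂ b₁ b₂ g

section EllipticRotation

variable {a₁ a₂ b₁ b₂ : R2} {g : ℝ}

lemma ellipticTurn_apply (x : R2) :
    ellipticTurn a₁ a₂ b₁ b₂ g x = (g⁻¹ * ⟪x, b₂⟫) • a₁ - (g * ⟪x, b₁⟫) • a₂ := by
  simp [ellipticTurn, smul_smul, real_inner_comm]

lemma ellipticRotation_apply (θ : ℝ) (x : R2) :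
    ellipticRotation a₁ a₂ b₁ b₂ g θ x =
      Real.cos θ • x + Real.sin θ • ellipticTurn a₁ a₂ b₁ b₂ g x := rfl

lemma inner_ellipticTurn_nonneg (hg : 0 < g) {x p : R2}
    (h : g ^ 2 * (⟪x, b₁⟫ * ⟪p, a₂⟫) ≤ ⟪x, b₂⟫ * ⟪p, a₁⟫) :
    0 ≤ ⟪p, ellipticTurn a₁ a₂ b₁ b₂ g x⟫ := by
  have hfactor : ⟪p, ellipticTurn a₁ a₂ b₁ b₂ g x⟫ =
      g⁻¹ * (⟪x, b₂⟫ * ⟪p, a₁⟫ - g ^ 2 * (⟪x, b₁⟫ * ⟪p, a₂⟫)) := by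
    rw [ellipticTurn_apply, inner_sub_right, real_inner_smul_right, real_inner_smul_right]
    field_simp
  rw [hfactor]
  exact mul_nonneg (inv_pos.2 hg).le (sub_nonneg.2 h)

namespace DualFrame

lemma ellipticTurn_ellipticTurn (F : DualFrame a₁ a₂ b₁ b₂) (hg : g ≠ 0) (x : R2) :
    ellipticTurn a₁ a₂ b₁ b₂ g (ellipticTurn a₁ a₂ b₁ b₂ g x) = -x := by
  have hx : ellipticTurn a₁ a₂ b₁ b₂ g x = (g⁻¹ * ⟪x, b₂⟫) • a₁ + (-(g * ⟪x, b₁⟫)) • a₂ := by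
    rw [ellipticTurn_apply, neg_smul, sub_eq_add_neg]
  rw [ellipticTurn_apply, hx, F.inner_comb_fst, F.inner_comb_snd, mul_neg,
    inv_mul_cancel_left₀ hg, mul_inv_cancel_left₀ hg, neg_smul, ← neg_add', F.comb_eq_self]

lemma ellipticRotation_ellipticRotation (F : DualFrame a₁ a₂ b₁ b₂) (hg : g ≠ 0) (θ τ : ℝ)
    (x : R2) : ellipticRotation a₁ a₂ b₁ b₂ g τ (ellipticRotation a₁ a₂ b₁ b₂ g θ x) =
      ellipticRotation a₁ a₂ b₁ b₂ g (θ + τ) x := by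
  simp only [ellipticRotation_apply, map_add, map_smul, F.ellipticTurn_ellipticTurn hg,
    Real.cos_add, Real.sin_add]
  module

lemma det_ellipticRotation (F : DualFrame a₁ a₂ b₁ b₂) (hg : g ≠ 0) (θ : ℝ) :
    LinearMap.det (ellipticRotation a₁ a₂ b₁ b₂ g θ) = 1 := by
  rw [F.det_eq, ← Real.cos_sq_add_sin_sq θ]
  simp only [ellipticRotation_apply, ellipticTurn_apply, inner_add_left, inner_sub_left,
    real_inner_smul_left, F.inner_fst_fst, F.inner_fst_snd, F.inner_snd_fst, F.inner_snd_snd]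
  field_simp
  ring

end DualFrame

end EllipticRotation

namespace PerpBox

variable {u v : R2 → ℝ} {Ω₁ Ω₂ : Set R2} {a₁ a₂ b₁ b₂ x p : R2} {k₀ ρ g : ℝ}

lemma inner_ellipticTurn_nonneg_of_nonpos_slope (B : PerpBox u v Ω₁ Ω₂ a₁ a₂ b₁ b₂ k₀ ρ)
    (hg : 0 < g) (hx : x ∈ frameBox b₁ b₂ ρ) (hp : IsSubgradient u x p) (hp₂ : ⟪p, a₂⟫ ≤ 0) :
    0 ≤ ⟪p, ellipticTurn a₁ a₂ b₁ b₂ g x⟫ :=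
  inner_ellipticTurn_nonneg hg <|
    (mul_nonpos_of_nonneg_of_nonpos (sq_nonneg g)
      (mul_nonpos_of_nonneg_of_nonpos hx.1.1 hp₂)).trans
        (mul_nonneg hx.2.1 (B.perpConfig.slope_nonneg hp))

lemma mul_slope_pos_of_outer (B : PerpBox u v Ω₁ Ω₂ a₁ a₂ b₁ b₂ k₀ ρ) (hx : x ∈ frameBox b₁ b₂ ρ)
    (hout : ⟪x, b₁⟫ = ρ ∨ ⟪x, b₂⟫ = ρ) (hp : IsSubgradient u x p) (hp₂ : 0 ≤ ⟪p, a₂⟫) :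
    0 < ⟪x, b₂⟫ * ⟪p, a₁⟫ := by
  obtain ⟨⟨hs, hsρ⟩, ht, htρ⟩ := hx
  rw [← B.perpConfig.frame.comb_eq_self x] at hp
  have ht0 : 0 < ⟪x, b₂⟫ := by
    refine ht.lt_of_ne' fun ht0 => ?_
    rcases hout with h | h
    · rw [ht0, zero_smul, add_zero] at hp
      exact hp₂.not_gt (B.slope_snd_neg_on_ray (h ▸ B.size_pos) hsρ hp)
    · exact B.size_pos.ne' (h.symm.trans ht0)
  exact mul_pos ht0 (B.perpConfig.slope_pos hs ht0 (htρ.trans B.size_le) hp)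

lemma exists_inner_ellipticTurn_nonneg_of_outer (B : PerpBox u v Ω₁ Ω₂ a₁ a₂ b₁ b₂ k₀ ρ) :
    ∃ g : ℝ, 0 < g ∧ g ≤ 1 ∧ ∀ x ∈ frameBox b₁ b₂ ρ, ⟪x, b₁⟫ = ρ ∨ ⟪x, b₂⟫ = ρ →
      ∀ p, IsSubgradient u x p → 0 ≤ ⟪p, ellipticTurn a₁ a₂ b₁ b₂ g x⟫ := by
  have hclosed : IsClosed {z : R2 × R2 | (⟪z.1, b₁⟫ = ρ ∨ ⟪z.1, b₂⟫ = ρ) ∧ 0 ≤ ⟪z.2, a₂⟫} :=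
    IsClosed.inter (s₂ := {z : R2 × R2 | 0 ≤ ⟪z.2, a₂⟫})
      (IsClosed.union (s₁ := {z : R2 × R2 | ⟪z.1, b₁⟫ = ρ}) (s₂ := {z : R2 × R2 | ⟪z.1, b₂⟫ = ρ})
        (isClosed_eq (by fun_prop) (by fun_prop)) (isClosed_eq (by fun_prop) (by fun_prop)))
      (isClosed_le (by fun_prop) (by fun_prop))
  have hcompact := (isCompact_subgradient_graph B.perpConfig.pair.continuous
    (B.perpConfig.frame.isCompact_frameBox (ρ := ρ))).inter_right hclosed
  obtain ⟨g, hg, hg1, hle⟩ := exists_sq_mul_le_of_isCompact hcompact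
    (f := fun z => ⟪z.1, b₂⟫ * ⟪z.2, a₁⟫) (h := fun z => ⟪z.1, b₁⟫ * ⟪z.2, a₂⟫)
    (by fun_prop) (by fun_prop)
    fun _ ⟨⟨hx, hp⟩, hout, hp₂⟩ => B.mul_slope_pos_of_outer hx hout hp hp₂
  refine ⟨g, hg, hg1, fun x hx hout p hp => ?_⟩
  rcases le_total 0 ⟪p, a₂⟫ with hp₂ | hp₂
  · exact inner_ellipticTurn_nonneg hg (hle (x, p) ⟨⟨hx, hp⟩, hout, hp₂⟩)
  · exact B.inner_ellipticTurn_nonneg_of_nonpos_slope hg hx hp hp₂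

lemma exists_inner_ellipticTurn_nonneg (B : PerpBox u v Ω₁ Ω₂ a₁ a₂ b₁ b₂ k₀ ρ) (hg : 0 < g)
    (hout : ⟪x, b₁⟫ = ρ ∨ ⟪x, b₂⟫ = ρ →
      ∀ p, IsSubgradient u x p → 0 ≤ ⟪p, ellipticTurn a₁ a₂ b₁ b₂ g x⟫)
    (hx : x ∈ frameBox b₁ b₂ ρ)
    (hx' : ¬(⟪x, b₁⟫ ∈ Ioo 0 ρ ∧ ⟪x, b₂⟫ ∈ Ioo 0 ρ ∧ x ∈ interior Ω₁)) :
    ∃ p, IsSubgradient u x p ∧ 0 ≤ ⟪p, ellipticTurn a₁ a₂ b₁ b₂ g x⟫ := by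
  have H := B.perpConfig
  obtain ⟨p, hp⟩ := exists_isSubgradient H.pair.convexOn H.pair.continuous x
  by_cases hfar : ⟪x, b₁⟫ = ρ ∨ ⟪x, b₂⟫ = ρ
  · exact ⟨p, hp, hout hfar p hp⟩
  obtain ⟨⟨hs, hsρ⟩, ht, htρ⟩ := id hx
  rcases hs.eq_or_lt with hs0 | hs0
  · refine ⟨p, hp, inner_ellipticTurn_nonneg hg ?_⟩
    rw [← hs0, zero_mul, mul_zero]
    exact mul_nonneg ht (H.slope_nonneg hp)
  have hcomb := H.frame.comb_eq_self x
  rcases ht.eq_or_lt with ht0 | ht0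
  · refine ⟨p, hp, B.inner_ellipticTurn_nonneg_of_nonpos_slope hg hx hp ?_⟩
    rw [← hcomb, ← ht0, zero_smul, add_zero] at hp
    exact (B.slope_snd_neg_on_ray hs0 hsρ hp).le
  rw [not_or] at hfar
  have hxΩ : x ∉ interior Ω₁ := fun hmem =>
    hx' ⟨⟨hs0, hsρ.lt_of_ne hfar.1⟩, ⟨ht0, htρ.lt_of_ne hfar.2⟩, hmem⟩
  obtain ⟨q, hq, hq₂⟩ := B.exists_nonpos_slope_of_notMem_interior hs0 hsρ ht htρ
    (by rwa [hcomb])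
  rw [hcomb] at hq
  exact ⟨q, hq, B.inner_ellipticTurn_nonneg_of_nonpos_slope hg hx hq hq₂⟩

-- On the boundary of the open box intersected with `Ω₁` the elliptic turn has nonnegative slope, so
-- the inequality holds there to first order; the comparison principle carries it inside.
lemma exists_le_apply_ellipticRotation (B : PerpBox u v Ω₁ Ω₂ a₁ a₂ b₁ b₂ k₀ ρ) :
    ∃ g M : ℝ, 0 < g ∧ g ≤ 1 ∧ ∀ x ∈ frameBox b₁ b₂ ρ, ∀ θ ∈ Icc 0 (Real.pi / 2),
      u x ≤ u (ellipticRotation a₁ a₂ b₁ b₂ g θ x) + M * θ ^ 2 := by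
  have H := B.perpConfig
  obtain ⟨g, hg, hg1, hout⟩ := B.exists_inner_ellipticTurn_nonneg_of_outer
  obtain ⟨M, hM⟩ := (isCompact_subgradient_graph H.pair.continuous
    (H.frame.isCompact_frameBox (ρ := ρ))).exists_bound_of_continuousOn
      (f := fun z => ⟪z.2, z.1⟫) (by fun_prop)
  refine ⟨g, M, hg, hg1, fun x hx θ ⟨hθ, hθ'⟩ => ?_⟩
  have hsin : 0 ≤ Real.sin θ :=
    Real.sin_nonneg_of_nonneg_of_le_pi hθ (by linarith [Real.pi_pos])
  set P : Set R2 := {x | ⟪x, b₁⟫ ∈ Ioo 0 ρ ∧ ⟪x, b₂⟫ ∈ Ioo 0 ρ ∧ x ∈ interior Ω₁}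
  have hbox : closure P ⊆ frameBox b₁ b₂ ρ := closure_minimal
    (fun y hy => ⟨Ioo_subset_Icc_self hy.1, Ioo_subset_Icc_self hy.2.1⟩) DualFrame.isClosed_frameBox
  have hbd (y : R2) (hy : y ∈ frameBox b₁ b₂ ρ) (hyP : y ∉ P) :
      u y ≤ u (ellipticRotation a₁ a₂ b₁ b₂ g θ y) + M * θ ^ 2 := by
    obtain ⟨p, hp, hturn⟩ := B.exists_inner_ellipticTurn_nonneg hg (hout y hy) hy hyP
    exact le_apply_cos_smul_add_sin_smul hp (hM (y, p) ⟨hy, hp⟩) hturn hsin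
  by_cases hxP : x ∈ P
  · have hPo : IsOpen P :=
      (isOpen_Ioo.preimage (by fun_prop : Continuous fun y : R2 => ⟪y, b₁⟫)).inter
        ((isOpen_Ioo.preimage (by fun_prop : Continuous fun y : R2 => ⟪y, b₂⟫)).inter
          isOpen_interior)
    exact le_comp_linearMap_add_of_frontier H.pair.convexOn H.pair.alexandrov
      (by rw [H.frame.det_ellipticRotation hg.ne', abs_one]) hPo
      (H.frame.isCompact_frameBox.isBounded.subset (subset_closure.trans hbox))
      (fun y hy _ => interior_subset hy.2.2) (fun y hy => hbd y (hbox hy)) hxP hxP.2.2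
  · exact hbd x hx hxP

lemma exists_apply_smul_snd_le (B : PerpBox u v Ω₁ Ω₂ a₁ a₂ b₁ b₂ k₀ ρ) :
    ∃ g : ℝ, 0 < g ∧ g ≤ 1 ∧ ∀ t : ℝ, 0 < t → t ≤ ρ → u ((g * t) • a₂) ≤ u (t • a₁) := by
  have F := B.perpConfig.frame
  obtain ⟨g, M, hg, hg1, hrot⟩ := B.exists_le_apply_ellipticRotation
  refine ⟨g, hg, hg1, fun t ht htρ => ?_⟩
  have hturn : ellipticTurn a₁ a₂ b₁ b₂ g ((g * t) • a₂) = t • a₁ := by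
    rw [ellipticTurn_apply, real_inner_smul_left, real_inner_smul_left, F.inner_snd_fst,
      F.inner_snd_snd, mul_one, inv_mul_cancel_left₀ hg.ne', mul_zero, mul_zero, zero_smul,
      sub_zero]
  have hbox (θ : ℝ) (hθ : 0 ≤ θ) (hθ' : θ ≤ Real.pi / 2) :
      ellipticRotation a₁ a₂ b₁ b₂ g θ ((g * t) • a₂) ∈ frameBox b₁ b₂ ρ := by
    have hsin := Real.sin_nonneg_of_nonneg_of_le_pi hθ (by linarith [Real.pi_pos])
    have hcos := Real.cos_nonneg_of_mem_Icc ⟨by linarith [Real.pi_pos], hθ'⟩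
    rw [ellipticRotation_apply, hturn, smul_smul, smul_smul, add_comm]
    refine F.comb_mem_frameBox ⟨by positivity, ?_⟩ ⟨by positivity, ?_⟩
    · exact (mul_le_of_le_one_left ht.le (Real.sin_le_one θ)).trans htρ
    · exact (mul_le_of_le_one_left (by positivity) (Real.cos_le_one θ)).trans
        ((mul_le_of_le_one_left ht.le hg1).trans htρ)
  have hends := le_of_le_add_mul_sq
    (f := fun θ => u (ellipticRotation a₁ a₂ b₁ b₂ g θ ((g * t) • a₂))) (M := M)
    Real.pi_div_two_pos.le fun θ τ hθ hτ hle => by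
      rw [← F.ellipticRotation_ellipticRotation hg.ne']
      exact hrot _ (hbox θ hθ (by linarith)) τ ⟨hτ, by linarith⟩
  simp only [ellipticRotation_apply, hturn, Real.cos_zero, Real.sin_zero, Real.cos_pi_div_two,
    Real.sin_pi_div_two, one_smul, zero_smul, add_zero, zero_add] at hends
  exact hends

end PerpBox

lemma IsSectionModel.apply_smul_sub_le {E : Type*} [NormedAddCommGroup E] [InnerProductSpace ℝ E]
    {u : E → ℝ} {Ω K : Set E} {c x y : E} {C h : ℝ} (M : IsSectionModel C h u Ω K c)
    (hx : u x ≤ h) (hx' : u (-x) ≤ h) (hy : y ∈ closure Ω) (hyh : u y ≤ h) :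
    u ((2 * C)⁻¹ • (x - y)) ≤ C * h := by
  refine M.le _ ?_
  have hmid := M.convex (M.inv_smul_mem_of_neg x hx hx') (M.neg_mem _ (M.inv_smul_mem y hy hyh))
    (by positivity : (0 : ℝ) ≤ 2⁻¹) (by positivity : (0 : ℝ) ≤ 2⁻¹) (by norm_num)
  rwa [← smul_add, ← sub_eq_add_neg, ← smul_sub, smul_smul, ← mul_inv] at hmid

lemma OTPair.exists_neg_inner_le {u v : R2 → ℝ} {Ω₁ Ω₂ : Set R2} (P : OTPair u v Ω₁ Ω₂) :
    ∃ C : ℝ, 0 < C ∧ ∀ x y p : R2, IsSubgradient u x p → 0 < u x → u x ≤ 1 → u (-x) ≤ u x →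
      y ∈ closure Ω₁ → u y ≤ u x → -⟪p, y⟫ ≤ C * ⟪p, x⟫ := by
  obtain ⟨C, hC, hmodels⟩ := P.hasSectionModels
  refine ⟨2 * C ^ 2, by positivity, fun x y p hp hpos hle hneg hy hyx => ?_⟩
  obtain ⟨K, c, M⟩ := hmodels (u x) hpos hle
  have hmid := (hp _).trans (M.apply_smul_sub_le le_rfl hneg hy hyx)
  have hux : u x ≤ ⟪p, x⟫ := by
    have h0 := hp 0
    rw [zero_sub, inner_neg_right, P.apply_zero] at h0
    linarith
  rw [inner_sub_right, real_inner_smul_right, inner_sub_right] at hmid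
  have hscaled : (2 * C)⁻¹ * -⟪p, y⟫ ≤ C * ⟪p, x⟫ := by
    have hsection : (C - 1) * u x ≤ (C - 1) * ⟪p, x⟫ := by gcongr
    have hdrop : 0 ≤ (2 * C)⁻¹ * ⟪p, x⟫ := mul_nonneg (by positivity) (hpos.le.trans hux)
    linarith
  rw [inv_mul_le_iff₀ (by positivity)] at hscaled
  linarith

namespace PerpBox

variable {u v : R2 → ℝ} {Ω₁ Ω₂ : Set R2} {a₁ a₂ b₁ b₂ : R2} {k₀ ρ σ : ℝ}

lemma eventually_slope_le (B : PerpBox u v Ω₁ Ω₂ a₁ a₂ b₁ b₂ k₀ ρ) (hσ : 0 < σ) :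
    ∀ᶠ t in nhdsWithin (0 : ℝ) (Ioi 0), ∀ p, IsSubgradient u (t • a₁) p →
      ⟪p, a₁⟫ ≤ σ * -⟪p, a₂⟫ := by
  have H := B.perpConfig
  have hk₀ := H.scale_pos
  obtain ⟨k, hk, hmem⟩ := H.exists_ray_mem σ hσ
  have hweights : ∀ᶠ p : R2 in nhds 0,
      -⟪p, a₂⟫ / k + (⟪p, a₁⟫ - σ * -⟪p, a₂⟫) / k₀ < 1 :=
    ContinuousAt.eventually_lt (by fun_prop) (by fun_prop) (by simp)
  obtain ⟨ε, hε, hsum⟩ := Metric.eventually_nhds_iff_ball.1 hweights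
  obtain ⟨r, hr, hsmall⟩ := H.pair.exists_norm_subgradient_lt hε
  have hnear : ∀ᶠ t : ℝ in nhds 0, ‖t • a₁‖ < r :=
    ContinuousAt.eventually_lt (by fun_prop) (by fun_prop) (by simpa using hr)
  filter_upwards [Ioc_mem_nhdsGT B.size_pos, nhdsWithin_le_nhds hnear] with t ⟨ht, htρ⟩ htr p hp
  have hp₂ : 0 < -⟪p, a₂⟫ := neg_pos.2 (B.slope_snd_neg_on_ray ht htρ hp)
  by_contra! hlt
  refine H.sub_smul_notMem_interior hp le_rfl ?_
  have hcomb := add_smul_mem_interior_of_zero_mem_closure H.pair.dual.convex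
    H.pair.swap.zero_mem_closure hmem
    (subset_closure (interior_subset H.dual_scale_smul_mem)) (div_pos hp₂ hk)
    (div_nonneg (sub_nonneg.2 hlt.le) hk₀.le)
    (hsum p (mem_ball_zero_iff.2 (hsmall _ htr.le p hp))).le
  rw [smul_smul, smul_smul, div_mul_cancel₀ _ hk.ne', div_mul_cancel₀ _ hk₀.ne'] at hcomb
  rw [zero_smul, sub_zero, ← H.frame.swap.comb_eq_self p]
  convert hcomb using 1
  module

end PerpBox

-- The section of height `u (t • a₁)` has width of order `t` in the direction `-a₂`, which bounds
-- the slope along `a₁` from below by a fixed multiple of the one along `-a₂`.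
lemma PerpConfig.false {u v : R2 → ℝ} {Ω₁ Ω₂ : Set R2} {a₁ a₂ b₁ b₂ : R2} {k₀ : ℝ}
    (H : PerpConfig u v Ω₁ Ω₂ a₁ a₂ b₁ b₂ k₀) : False := by
  obtain ⟨ρ, B⟩ := H.exists_box
  obtain ⟨g, hg, hg1, hray⟩ := B.exists_apply_smul_snd_le
  obtain ⟨C, hC, hbound⟩ := H.pair.exists_neg_inner_le
  have hc := H.pair.continuous
  have hheight : ∀ᶠ t : ℝ in nhds 0, u (t • a₁) < 1 :=
    ContinuousAt.eventually_lt (by fun_prop) (by fun_prop) (by simp [H.pair.apply_zero])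
  have hsmall : ∀ᶠ t in nhdsWithin (0 : ℝ) (Ioi 0), u (t • a₁) < 1 ∧ 0 < t ∧ t ≤ ρ := by
    filter_upwards [nhdsWithin_le_nhds hheight, Ioc_mem_nhdsGT B.size_pos] with t hu1 ht
    exact ⟨hu1, ht⟩
  obtain ⟨t, hslope, hu1, ht, htρ⟩ :=
    ((B.eventually_slope_le (σ := g / (2 * C)) (by positivity)).and hsmall).exists
  obtain ⟨p, hp⟩ := exists_isSubgradient H.pair.convexOn hc (t • a₁)
  have hupos := H.apply_smul_pos ht
  have hmem : (g * t) • a₂ ∈ interior Ω₁ :=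
    H.smul_mem (by positivity) ((mul_le_of_le_one_left ht.le hg1).trans (htρ.trans B.size_le))
  have hle := hbound (t • a₁) ((g * t) • a₂) p hp hupos hu1.le
    ((H.apply_neg_smul ht.le).trans_le hupos.le) (subset_closure (interior_subset hmem))
    (hray t ht htρ)
  rw [real_inner_smul_right, real_inner_smul_right] at hle
  have hp₂ := B.slope_snd_neg_on_ray ht htρ hp
  have hsteep : C * (t * ⟪p, a₁⟫) ≤ g * t * -⟪p, a₂⟫ / 2 := by
    calc C * (t * ⟪p, a₁⟫) ≤ C * (t * (g / (2 * C) * -⟪p, a₂⟫)) := by gcongr; exact hslope p hp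
      _ = g * t * -⟪p, a₂⟫ / 2 := by field_simp
  linarith [mul_pos (mul_pos hg ht) (neg_pos.2 hp₂)]

section TangentDirections

variable {Ω : Set R2} {a n r w : R2}

lemma subset_tangentConeZero : Ω ⊆ tangentConeZero Ω :=
  fun x hx => subset_closure ⟨1, zero_le_one, x, hx, (one_smul ℝ x).symm⟩

lemma smul_mem_tangentConeZero (hr : r ∈ tangentConeZero Ω) {c : ℝ} (hc : 0 ≤ c) :
    c • r ∈ tangentConeZero Ω := by
  refine map_mem_closure (continuous_const_smul c) hr ?_
  rintro _ ⟨t, ht, x, hx, rfl⟩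
  exact ⟨c * t, mul_nonneg hc ht, x, hx, smul_smul c t x⟩

lemma exists_smul_mem_interior_of_mem_tangentConeZero (hΩ : Convex ℝ Ω)
    (hr : r ∈ tangentConeZero Ω) (hw : w ∈ interior Ω) {ε : ℝ} (hε : 0 < ε) :
    ∃ k : ℝ, 0 < k ∧ k • (r + ε • w) ∈ interior Ω := by
  obtain ⟨δ, hδ, hball⟩ := Metric.isOpen_iff.1 isOpen_interior w hw
  obtain ⟨y, ⟨t, ht, x, hx, rfl⟩, hdist⟩ := Metric.mem_closure_iff.1 hr (ε * δ) (by positivity)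
  have hnear : w + ε⁻¹ • (r - t • x) ∈ interior Ω := by
    refine hball ?_
    rw [mem_ball_iff_norm, add_sub_cancel_left, norm_smul, norm_inv, Real.norm_of_nonneg hε.le,
      ← dist_eq_norm, inv_mul_lt_iff₀ hε]
    exact hdist
  have hsplit : r + ε • w = t • x + ε • (w + ε⁻¹ • (r - t • x)) := by
    rw [smul_add, smul_inv_smul₀ hε.ne']
    abel
  have hs : 0 < t + ε := by positivity
  have hcomb := hΩ.combo_self_interior_mem_interior hx hnear (a := (t + ε)⁻¹ * t)
    (b := (t + ε)⁻¹ * ε) (by positivity) (by positivity)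
    (by rw [← mul_add, inv_mul_cancel₀ hs.ne'])
  rw [mul_smul, mul_smul, ← smul_add, ← hsplit] at hcomb
  exact ⟨(t + ε)⁻¹, inv_pos.2 hs, hcomb⟩

lemma inner_pos_of_mem_interior {E : Type*} [NormedAddCommGroup E] [InnerProductSpace ℝ E]
    {S : Set E} {d y : E} (hd : d ≠ 0) (h : ∀ x ∈ S, 0 ≤ ⟪x, d⟫) (hy : y ∈ interior S) :
    0 < ⟪y, d⟫ := by
  obtain ⟨τ, hτ, hmem⟩ := exists_add_smul_mem_interior hy d
  have hback := h _ (interior_subset (hmem (-τ) (by rw [abs_neg, abs_of_pos hτ])))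
  rw [inner_add_left, real_inner_smul_left] at hback
  linarith [mul_pos hτ (real_inner_self_pos.2 hd)]

lemma exists_smul_mem_interior_of_tangent_le (hΩ : Convex ℝ Ω) (hi : (interior Ω).Nonempty)
    (F : DualFrame a n a n) (ha : a ∈ tangentConeZero Ω) (h : ∀ x ∈ Ω, 0 ≤ ⟪x, n⟫) :
    ∃ m₀ : ℝ, ∀ m, m₀ ≤ m → ∃ k : ℝ, 0 < k ∧ k • (n + m • a) ∈ interior Ω := by
  obtain ⟨w, hw⟩ := hi
  have hwn := inner_pos_of_mem_interior F.snd_ne_zero h hw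
  refine ⟨⟪w, a⟫ / ⟪w, n⟫, fun m hm => ?_⟩
  have hsplit : n + m • a = (m - ⟪w, a⟫ / ⟪w, n⟫) • a + ⟪w, n⟫⁻¹ • w := by
    have hw' : ⟪w, n⟫⁻¹ • w = (⟪w, a⟫ / ⟪w, n⟫) • a + n := by
      calc ⟪w, n⟫⁻¹ • w = ⟪w, n⟫⁻¹ • (⟪w, a⟫ • a + ⟪w, n⟫ • n) := by rw [F.comb_eq_self]
        _ = (⟪w, a⟫ / ⟪w, n⟫) • a + n := by
          rw [smul_add, inv_smul_smul₀ hwn.ne', smul_smul, div_eq_inv_mul]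
    rw [hw']
    module
  rw [hsplit]
  exact exists_smul_mem_interior_of_mem_tangentConeZero hΩ
    (smul_mem_tangentConeZero ha (sub_nonneg.2 hm)) hw (inv_pos.2 hwn)

end TangentDirections

namespace DualFrame

variable {a₁ a₂ b₁ b₂ a n : R2}

lemma of_orthonormal (ha : ‖a‖ = 1) (hn : ‖n‖ = 1) (han : ⟪a, n⟫ = 0) : DualFrame a n a n where
  inner_fst_fst := by rw [real_inner_self_eq_norm_sq, ha, one_pow]
  inner_fst_snd := han
  inner_snd_fst := by rw [real_inner_comm, han]
  inner_snd_snd := by rw [real_inner_self_eq_norm_sq, hn, one_pow]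

lemma shear (F : DualFrame a₁ a₂ b₁ b₂) (m : ℝ) :
    DualFrame a₁ (a₂ + m • a₁) (b₁ + m • -b₂) b₂ := by
  constructor <;> simp [inner_add_left, inner_add_right, real_inner_smul_left,
    real_inner_smul_right, F.inner_fst_fst, F.inner_fst_snd, F.inner_snd_fst, F.inner_snd_snd]

end DualFrame

lemma OTPair.false_of_perpendicular {u v : R2 → ℝ} {Ω₁ Ω₂ : Set R2} {a n : R2}
    (P : OTPair u v Ω₁ Ω₂) (ha : ‖a‖ = 1) (hn : ‖n‖ = 1) (han : ⟪a, n⟫ = 0)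
    (ha₁ : a ∈ tangentConeZero Ω₁) (hn₂ : -n ∈ tangentConeZero Ω₂)
    (hΩ₁ : ∀ x ∈ Ω₁, 0 ≤ ⟪x, n⟫) (hΩ₂ : ∀ y ∈ Ω₂, 0 ≤ ⟪y, a⟫) : False := by
  have F := DualFrame.of_orthonormal ha hn han
  have F' : DualFrame (-n) a (-n) a := DualFrame.of_orthonormal (by rwa [norm_neg]) ha
    (by rw [inner_neg_left, F.inner_snd_fst, neg_zero])
  obtain ⟨m₁, hm₁⟩ := exists_smul_mem_interior_of_tangent_le P.convex P.interior_nonempty F ha₁ hΩ₁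
  obtain ⟨m₂, hm₂⟩ := exists_smul_mem_interior_of_tangent_le P.dual.convex P.dual.interior_nonempty
    F' hn₂ hΩ₂
  set m := max m₁ m₂
  obtain ⟨k₁, hk₁, hmem₁⟩ := hm₁ m (le_max_left _ _)
  obtain ⟨k₂, hk₂, hmem₂⟩ := hm₂ m (le_max_right _ _)
  have hk : 0 < min k₁ k₂ := lt_min hk₁ hk₂
  have H : PerpConfig u v Ω₁ Ω₂ a (n + m • a) (a + m • -n) n (min k₁ k₂) :=
    { pair := P
      frame := F.shear m
      inner_nonneg := hΩ₁
      dual_inner_nonneg := hΩ₂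
      scale_pos := hk
      scale_smul_mem :=
        smul_mem_interior_of_le P.convex P.zero_mem_closure hk (min_le_left _ _) hmem₁
      dual_scale_smul_mem :=
        smul_mem_interior_of_le P.dual.convex P.swap.zero_mem_closure hk (min_le_right _ _) hmem₂
      exists_ray_mem := fun σ hσ => by
        obtain ⟨k, hk, hmem⟩ := hm₂ (m + σ⁻¹) ((le_max_right _ _).trans
          (le_add_of_nonneg_right (inv_pos.2 hσ).le))
        refine ⟨k * σ⁻¹, by positivity, ?_⟩
        have hray : σ⁻¹ • (σ • (a + m • -n) - n) = a + (m + σ⁻¹) • -n := by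
          rw [smul_sub, inv_smul_smul₀ hσ.ne']
          module
        rwa [mul_smul, hray] }
  exact H.false

/-- Rotation by a quarter turn, counterclockwise for `ε = 1` and clockwise for `ε = -1`. -/
def quarterTurn (ε : ℝ) (a : R2) : R2 := !₂[-(ε * a 1), ε * a 0]

section QuarterTurn

variable {ε : ℝ} {a x r₁ r₂ : R2}

lemma inner_eq_coords : ⟪a, x⟫ = a 0 * x 0 + a 1 * x 1 := by
  rw [PiLp.inner_apply, Fin.sum_univ_two]
  simp [mul_comm]

lemma inner_quarterTurn : ⟪x, quarterTurn ε a⟫ = ε * det2 a x := by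
  simp [inner_eq_coords, quarterTurn, det2]
  ring

lemma inner_quarterTurn_comm : ⟪x, quarterTurn ε a⟫ = -⟪a, quarterTurn ε x⟫ := by
  rw [inner_quarterTurn, inner_quarterTurn, det2, det2]
  ring

lemma inner_self_quarterTurn : ⟪a, quarterTurn ε a⟫ = 0 :=
  self_eq_neg.1 inner_quarterTurn_comm

lemma norm_quarterTurn (hε : ε ^ 2 = 1) : ‖quarterTurn ε a‖ = ‖a‖ := by
  rw [EuclideanSpace.norm_eq, EuclideanSpace.norm_eq]
  simp [quarterTurn, Fin.sum_univ_two, mul_pow, hε, sq_abs, add_comm]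

lemma inner_smul_eq_quarterTurn (hε : ε ^ 2 = 1) :
    ⟪r₁, r₂⟫ • x = ⟪x, r₂⟫ • r₁ + ⟪x, quarterTurn ε r₁⟫ • quarterTurn ε r₂ := by
  rw [inner_quarterTurn, inner_eq_coords, inner_eq_coords, det2]
  ext i
  fin_cases i
  · simp [quarterTurn]
    linear_combination (x 1 * r₁ 0 * r₂ 1 - x 0 * r₁ 1 * r₂ 1) * hε
  · simp [quarterTurn]
    linear_combination (x 0 * r₁ 1 * r₂ 0 - x 1 * r₁ 0 * r₂ 0) * hε

lemma eq_inner_smul_quarterTurn (hε : ε ^ 2 = 1) (hr₁ : ‖r₁‖ = 1) (h : ⟪x, r₁⟫ = 0) :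
    x = ⟪x, quarterTurn ε r₁⟫ • quarterTurn ε r₁ := by
  simpa [h, hr₁] using inner_smul_eq_quarterTurn hε (r₁ := r₁) (r₂ := r₁) (x := x)

end QuarterTurn

/-- `r` is the unit direction of a one-sided tangent ray of `Ω` at the origin: the left one for
`ε = -1` and the right one for `ε = 1`. -/
structure IsTangentRay (ε : ℝ) (Ω : Set R2) (r : R2) : Prop where
  norm_eq_one : ‖r‖ = 1
  mem_tangentConeZero : r ∈ tangentConeZero Ω
  inner_nonneg : ∀ x ∈ Ω, 0 ≤ ⟪x, quarterTurn ε r⟫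

lemma IsLeftTangent.isTangentRay {Ω : Set R2} {r : R2} (h : IsLeftTangent Ω r) :
    IsTangentRay (-1) Ω r where
  norm_eq_one := h.1
  mem_tangentConeZero := h.2.1
  inner_nonneg x hx := by
    rw [inner_quarterTurn, neg_one_mul, Left.nonneg_neg_iff]
    exact h.2.2 x (subset_tangentConeZero hx)

lemma IsRightTangent.isTangentRay {Ω : Set R2} {r : R2} (h : IsRightTangent Ω r) :
    IsTangentRay 1 Ω r where
  norm_eq_one := h.1
  mem_tangentConeZero := h.2.1
  inner_nonneg x hx := by
    rw [inner_quarterTurn, one_mul]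
    exact h.2.2 x (subset_tangentConeZero hx)

namespace OTPair

variable {u v : R2 → ℝ} {Ω₁ Ω₂ : Set R2} {ε : ℝ} {r₁ r₂ x n : R2}

lemma neg_notMem_interior (P : OTPair u v Ω₁ Ω₂) (h : ∀ y ∈ Ω₂, 0 ≤ ⟪y, n⟫) :
    -n ∉ interior Ω₁ := by
  intro hmem
  have hle := le_add_smul_of_subgradients_nonneg P.convexOn P.continuous
    (fun x p hp => inner_nonneg_of_mem_closure h (P.mem_closure x p hp)) (-n) zero_le_one
  rw [one_smul, neg_add_cancel, P.apply_zero] at hle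
  rcases eq_or_ne (-n) 0 with h0 | h0
  · exact P.zero_mem_frontier.2 (h0 ▸ hmem)
  · exact hle.not_gt (P.pos_of_mem_closure (subset_closure (interior_subset hmem)) h0)

-- If `⟪x, r₂⟫ > 0`, the cone over `r₁` and `x` contains `-quarterTurn ε r₂`.
lemma inner_nonpos_of_obtuse (P : OTPair u v Ω₁ Ω₂) (hε : ε ^ 2 = 1) (h₁ : IsTangentRay ε Ω₁ r₁)
    (h₂ : IsTangentRay ε Ω₂ r₂) (hneg : ⟪r₁, r₂⟫ < 0) (hx : x ∈ closure Ω₁) : ⟪x, r₂⟫ ≤ 0 := by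
  have hint : ∀ x ∈ interior Ω₁, 0 ≤ ⟪x, -r₂⟫ := by
    intro x hx
    rw [inner_neg_right, Left.nonneg_neg_iff]
    by_contra! hpos
    obtain ⟨k, hk, hmem⟩ := exists_smul_mem_interior_of_mem_tangentConeZero P.convex
      (smul_mem_tangentConeZero h₁.mem_tangentConeZero hpos.le) hx (neg_pos.2 hneg)
    have hsum : k • (⟪x, r₂⟫ • r₁ + -⟪r₁, r₂⟫ • x) =
        -((k * ⟪x, quarterTurn ε r₁⟫) • quarterTurn ε r₂) := by
      rw [neg_smul, inner_smul_eq_quarterTurn hε (r₁ := r₁) (r₂ := r₂) (x := x)]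
      module
    refine P.neg_notMem_interior (fun y hy => ?_) (hsum ▸ hmem)
    rw [real_inner_smul_right]
    exact mul_nonneg (mul_nonneg hk.le (h₁.inner_nonneg x (interior_subset hx)))
      (h₂.inner_nonneg y hy)
  rw [← P.convex.closure_interior_eq_closure_of_nonempty_interior P.interior_nonempty] at hx
  have hle := inner_nonneg_of_mem_closure hint hx
  rwa [inner_neg_right, Left.nonneg_neg_iff] at hle

lemma inner_tangent_nonneg (P : OTPair u v Ω₁ Ω₂) (hε : ε ^ 2 = 1) (h₁ : IsTangentRay ε Ω₁ r₁)
    (h₂ : IsTangentRay ε Ω₂ r₂) : 0 ≤ ⟪r₁, r₂⟫ := by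
  by_contra! hneg
  obtain ⟨x, hx⟩ := P.interior_nonempty
  have hx0 : x ≠ 0 := by
    rintro rfl
    exact P.zero_mem_frontier.2 hx
  have hxc := subset_closure (interior_subset hx)
  obtain ⟨p, hp⟩ := exists_isSubgradient P.convexOn P.continuous x
  have hpc := P.mem_closure x p hp
  have hpx : 0 < ⟪p, x⟫ := by
    have h0 := hp 0
    rw [zero_sub, inner_neg_right, P.apply_zero] at h0
    linarith [P.pos_of_mem_closure hxc hx0]
  have hpair := congrArg (fun z => ⟪p, z⟫)
    (inner_smul_eq_quarterTurn hε (r₁ := r₁) (r₂ := r₂) (x := x))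
  simp only [inner_add_right, real_inner_smul_right] at hpair
  have hrays : 0 ≤ ⟪x, r₂⟫ * ⟪p, r₁⟫ := mul_nonneg_of_nonpos_of_nonpos
    (P.inner_nonpos_of_obtuse hε h₁ h₂ hneg hxc)
    (P.swap.inner_nonpos_of_obtuse hε h₂ h₁ (by rwa [real_inner_comm]) hpc)
  have hnormals : 0 ≤ ⟪x, quarterTurn ε r₁⟫ * ⟪p, quarterTurn ε r₂⟫ := mul_nonneg
    (h₁.inner_nonneg x (interior_subset hx)) (inner_nonneg_of_mem_closure h₂.inner_nonneg hpc)
  linarith [mul_neg_of_neg_of_pos hneg hpx]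

lemma inner_tangent_ne_zero (P : OTPair u v Ω₁ Ω₂) (hε : ε ^ 2 = 1) (h₁ : IsTangentRay ε Ω₁ r₁)
    (h₂ : IsTangentRay ε Ω₂ r₂) : ⟪r₁, r₂⟫ ≠ 0 := by
  intro h0
  have hr₁ := eq_inner_smul_quarterTurn hε h₂.norm_eq_one h0
  have hr₂ := eq_inner_smul_quarterTurn hε h₁.norm_eq_one (by rwa [real_inner_comm])
  rw [inner_quarterTurn_comm] at hr₁
  have hsq : ⟪r₂, quarterTurn ε r₁⟫ * ⟪r₂, quarterTurn ε r₁⟫ = 1 := by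
    rw [← real_inner_smul_right, ← hr₂, real_inner_self_eq_norm_sq, h₂.norm_eq_one, one_pow]
  rcases mul_self_eq_one_iff.1 hsq with hc | hc
  · rw [hc, neg_smul, one_smul] at hr₁
    rw [hc, one_smul] at hr₂
    exact P.swap.false_of_perpendicular h₂.norm_eq_one
      ((norm_quarterTurn hε).trans h₂.norm_eq_one) inner_self_quarterTurn h₂.mem_tangentConeZero
      (hr₁ ▸ h₁.mem_tangentConeZero) h₂.inner_nonneg (hr₂ ▸ h₁.inner_nonneg)
  · rw [hc, neg_neg, one_smul] at hr₁
    rw [hc, neg_smul, one_smul] at hr₂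
    exact P.false_of_perpendicular h₁.norm_eq_one
      ((norm_quarterTurn hε).trans h₁.norm_eq_one) inner_self_quarterTurn h₁.mem_tangentConeZero
      (hr₂ ▸ h₂.mem_tangentConeZero) h₁.inner_nonneg (hr₁ ▸ h₂.inner_nonneg)

lemma inner_tangent_pos (P : OTPair u v Ω₁ Ω₂) (hε : ε ^ 2 = 1) (h₁ : IsTangentRay ε Ω₁ r₁)
    (h₂ : IsTangentRay ε Ω₂ r₂) : 0 < ⟪r₁, r₂⟫ :=
  (P.inner_tangent_nonneg hε h₁ h₂).lt_of_ne' (P.inner_tangent_ne_zero hε h₁ h₂)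

end OTPair

/-- obliqueness for pairs in `S(δ̄)`: at the origin, the left tangents of
`Ω₁` and `Ω₂` make a strictly positive inner product, and likewise for the right tangents. -/
theorem stmt_9 (δb : ℝ) (hδb : 0 < δb)
    (u v : R2 → ℝ) (Ω₁ Ω₂ : Set R2) (L l : ℝ → ℝ) (e f : ℝ → R2)
    (hmem : InSFamily δb u v Ω₁ Ω₂ L l e f)
    (L₁ L₂ R₁ R₂ : R2)
    (hL₁ : IsLeftTangent Ω₁ L₁) (hL₂ : IsLeftTangent Ω₂ L₂)
    (hR₁ : IsRightTangent Ω₁ R₁) (hR₂ : IsRightTangent Ω₂ R₂) :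
    0 < ⟪L₁, L₂⟫ ∧ 0 < ⟪R₁, R₂⟫ := by
  have P : OTPair u v Ω₁ Ω₂ := hmem.otPair hδb
  exact ⟨P.inner_tangent_pos (by norm_num) hL₁.isTangentRay hL₂.isTangentRay,
    P.inner_tangent_pos (by norm_num) hR₁.isTangentRay hR₂.isTangentRay⟩
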